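/- arXiv:2006.01288 — 12 statements merged into one kernel-verified Lean document; each statement's English description precedes it below -/
import Mathlib

section
/- Let F be a field, n ≥ 1, and A an invertible n×n matrix over F. If there exists an invertible n×n matrix B over F with Bᵀ = B and A·B·Aᵀ = B, then A is conjugate to its inverse: there exists an invertible n×n matrix P over F with P·A·P⁻¹ = A⁻¹. -/
open Polynomial DirectSum

/-- A symmetric separating form for which polynomials are self-adjoint. -/
def GoodForm (F : Type*) [Field F] (M : Type*) [AddCommGroup M] [Module F[X] M] : Prop :=
  ∃ β : M → M → F, (∀ x x' y, β (x + x') y = β x y + β x' y) ∧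
    (∀ (c : F) x y, β ((C c : F[X]) • x) y = c * β x y) ∧
    (∀ (r : F[X]) x y, β (r • x) y = β x (r • y)) ∧
    (∀ x y, β x y = β y x) ∧ (∀ x, (∀ y, β x y = 0) → x = 0)

theorem goodForm_congr {F : Type*} [Field F] {M N : Type*} [AddCommGroup M] [Module F[X] M]
    [AddCommGroup N] [Module F[X] N] (e : M ≃ₗ[F[X]] N) (h : GoodForm F N) : GoodForm F M := by
  obtain ⟨β, h1, h2, h3, h4, h5⟩ := h
  refine ⟨fun x y => β (e x) (e y), ?_, ?_, ?_, ?_, ?_⟩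
  · intro x x' y; simp [h1]
  · intro c x y; simp only [map_smul, h2]
  · intro r x y; simp only [map_smul, h3]
  · intro x y; exact h4 _ _
  · intro x hx
    have : e x = 0 := h5 _ fun y => by simpa using hx (e.symm y)
    simpa using this

theorem goodForm_sum {F : Type*} [Field F] {ι : Type*} [Fintype ι] [DecidableEq ι]
    (N : ι → Type*) [∀ i, AddCommGroup (N i)] [∀ i, Module F[X] (N i)]
    (h : ∀ i, GoodForm F (N i)) : GoodForm F (⨁ i, N i) := by
  choose β h1 h2 h3 h4 h5 using h
  have z : ∀ i x, β i x 0 = 0 := by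
    intro i x
    have := h1 i 0 0 x
    rw [h4]; simpa using this
  refine ⟨fun x y => ∑ i, β i (x i) (y i), ?_, ?_, ?_, ?_, ?_⟩
  · intro x x' y; simp [h1, Finset.sum_add_distrib]
  · intro c x y; simp only [DirectSum.smul_apply, h2, Finset.mul_sum]
  · intro r x y; simp only [DirectSum.smul_apply, h3]
  · intro x y; exact Finset.sum_congr rfl fun i _ => h4 _ _ _
  · intro x hx
    ext i
    refine h5 i _ fun y => ?_
    have := hx (DirectSum.of N i y)
    beta_reduce at this
    rw [Finset.sum_eq_single i] at this
    · simpa using this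
    · intro j _ hj
      rw [DirectSum.of_eq_of_ne _ _ _ hj, z]
    · simp

theorem goodForm_quot {F : Type*} [Field F] (q : F[X]) (hq : q ≠ 0) :
    GoodForm F (F[X] ⧸ Submodule.span F[X] {q}) := by
  set S := Submodule.span F[X] {q}
  have key : ∀ a b : F[X], (Submodule.Quotient.mk a : F[X] ⧸ S) = Submodule.Quotient.mk b →
      ∀ c, (a * c) % q = (b * c) % q := by
    intro a b hab c
    rw [Submodule.Quotient.eq, Submodule.mem_span_singleton] at hab
    obtain ⟨d, hd⟩ := hab
    have : a * c = b * c + q * (d * c) := by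
      rw [smul_eq_mul] at hd; linear_combination (-c) * hd
    rw [this, Polynomial.add_mod]; simp
  let o : F[X] ⧸ S → F[X] := fun x => Quotient.out x
  have ho : ∀ x, (Submodule.Quotient.mk (o x) : F[X] ⧸ S) = x := fun x => Quotient.out_eq' x
  let β : F[X] ⧸ S → F[X] ⧸ S → F := fun x y => ((o x * o y) % q).coeff (q.natDegree - 1)
  have hβ : ∀ a b : F[X], β (Submodule.Quotient.mk a) (Submodule.Quotient.mk b) =
      ((a * b) % q).coeff (q.natDegree - 1) := by
    intro a b
    simp only [β]
    rw [key _ _ (ho _), mul_comm a, key _ _ (ho _), mul_comm b]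
  have hs : Function.Surjective (Submodule.Quotient.mk : F[X] → F[X] ⧸ S) :=
    Submodule.Quotient.mk_surjective S
  refine ⟨β, ?_, ?_, ?_, ?_, ?_⟩
  · intro x x' y
    obtain ⟨a, rfl⟩ := hs x
    obtain ⟨b, rfl⟩ := hs x'
    obtain ⟨c, rfl⟩ := hs y
    rw [← Submodule.Quotient.mk_add, hβ, hβ, hβ, add_mul, Polynomial.add_mod, coeff_add]
  · intro c x y
    obtain ⟨a, rfl⟩ := hs x
    obtain ⟨b, rfl⟩ := hs y
    rw [← Submodule.Quotient.mk_smul, hβ, hβ, smul_eq_mul, mul_assoc, ← smul_eq_C_mul,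
      Polynomial.mod_def, Polynomial.smul_modByMonic, ← Polynomial.mod_def, coeff_smul, smul_eq_mul]
  · intro r x y
    obtain ⟨a, rfl⟩ := hs x
    obtain ⟨b, rfl⟩ := hs y
    rw [← Submodule.Quotient.mk_smul, ← Submodule.Quotient.mk_smul, hβ, hβ, smul_eq_mul,
      smul_eq_mul, mul_left_comm, mul_assoc]
  · intro x y
    simp only [β, mul_comm]
  · intro x hx
    obtain ⟨a, rfl⟩ := hs x
    by_contra hne
    have ha : a % q ≠ 0 := by
      intro h0
      apply hne
      rw [Submodule.Quotient.mk_eq_zero]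
      exact Submodule.mem_span_singleton.2
        (by obtain ⟨d, hd⟩ := (EuclideanDomain.mod_eq_zero.1 h0)
            exact ⟨d, by rw [hd, smul_eq_mul, mul_comm]⟩)
    set b := a % q with hb
    have hab : (Submodule.Quotient.mk a : F[X] ⧸ S) = Submodule.Quotient.mk b := by
      rw [Submodule.Quotient.eq, Submodule.mem_span_singleton]
      exact ⟨a / q, by rw [smul_eq_mul, hb]; linear_combination EuclideanDomain.div_add_mod a q⟩
    have hd : b.degree < q.degree := EuclideanDomain.mod_lt a hq
    have hd' : b.natDegree < q.natDegree := natDegree_lt_natDegree ha hd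
    have := hx (Submodule.Quotient.mk (X ^ (q.natDegree - 1 - b.natDegree)))
    rw [hab, hβ, (Polynomial.mod_eq_self_iff hq).2] at this
    · rw [coeff_mul_X_pow', if_pos (by omega)] at this
      rw [show q.natDegree - 1 - (q.natDegree - 1 - b.natDegree) = b.natDegree by omega] at this
      exact ha (leadingCoeff_eq_zero.1 this)
    · rw [degree_mul, degree_X_pow, degree_eq_natDegree ha, degree_eq_natDegree hq]
      norm_cast
      omega

theorem exists_symm (F : Type*) [Field F] (n : ℕ) (A : Matrix (Fin n) (Fin n) F) :
    ∃ S : Matrix (Fin n) (Fin n) F, IsUnit S ∧ A.transpose * S = S * A := by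
  classical
  let f := Matrix.toLin' A
  have ht : Module.IsTorsion F[X] (Module.AEval' f) := by
    intro x
    refine ⟨⟨f.charpoly, mem_nonZeroDivisors_of_ne_zero f.charpoly_monic.ne_zero⟩, ?_⟩
    obtain ⟨y, rfl⟩ := (Module.AEval'.of f).surjective x
    show f.charpoly • _ = (0 : Module.AEval' f)
    rw [← Module.AEval.of_aeval_smul, LinearMap.aeval_self_charpoly]
    simp
  obtain ⟨ι, hι, p, hp, e, ⟨eq⟩⟩ := Module.equiv_directSum_of_isTorsion ht
  obtain ⟨β, h1, h2, h3, h4, h5⟩ := goodForm_congr eq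
    (goodForm_sum _ fun i => goodForm_quot (p i ^ e i) (pow_ne_zero _ (hp i).ne_zero))
  let o := Module.AEval'.of f
  have hc : ∀ (c : F) (x), o (c • x) = (C c : F[X]) • o x := by
    intro c x
    rw [map_smul]
    exact (Module.AEval.C_smul f c (o x)).symm
  let b : LinearMap.BilinForm F (Fin n → F) := LinearMap.mk₂ F (fun x y => β (o x) (o y))
    (by intro x y z; simp only [map_add, h1])
    (by intro c x y; simp only [hc, h2, smul_eq_mul])
    (by intro x y z; simp only [map_add, h4 (o x), h1])
    (by intro c x y; simp only [hc, h4 (o x), h2, smul_eq_mul])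
  have hb : ∀ x y, b x y = β (o x) (o y) := fun x y => rfl
  have hsep : b.SeparatingLeft := by
    intro x hx
    have : o x = 0 := h5 _ fun y => by
      obtain ⟨y, rfl⟩ := o.surjective y
      exact hx y
    simpa using this
  have hadj : ∀ x y, b (f x) y = b x (f y) := by
    intro x y
    have hX : ∀ x, o (f x) = (X : F[X]) • o x := fun x => (Module.AEval'.X_smul_of f x).symm
    rw [hb, hb, hX, hX, h3]
  refine ⟨LinearMap.toMatrix₂' F b, ?_, ?_⟩
  · rw [Matrix.isUnit_iff_isUnit_det, isUnit_iff_ne_zero]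
    exact (Matrix.separatingLeft_iff_det_ne_zero).1 (LinearMap.SeparatingLeft.toMatrix₂' hsep)
  · have h1 := LinearMap.toMatrix₂'_comp (R := F) b f
    have h2 := LinearMap.toMatrix₂'_compl₂ (R := F) b f
    rw [LinearMap.toMatrix'_toLin'] at h1 h2
    rw [← h1, ← h2]
    congr 1
    ext x y
    simp [hadj]

/-- An invertible matrix preserving some non-degenerate symmetric bilinear form is
conjugate to its inverse. -/
theorem stmt0 (F : Type*) [Field F] (n : ℕ) (hn : 1 ≤ n)
    (A : Matrix (Fin n) (Fin n) F) (hA : IsUnit A)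
    (h : ∃ B : Matrix (Fin n) (Fin n) F,
      IsUnit B ∧ B.transpose = B ∧ A * B * A.transpose = B) :
    ∃ P : Matrix (Fin n) (Fin n) F, IsUnit P ∧ P * A * P⁻¹ = A⁻¹ := by
  obtain ⟨B, hB, -, hAB⟩ := h
  obtain ⟨S, hS, hAS⟩ := exists_symm F n A
  refine ⟨B * S, hB.mul hS, ?_⟩
  have hdA := (Matrix.isUnit_iff_isUnit_det A).1 hA
  have hdP := (Matrix.isUnit_iff_isUnit_det _).1 (hB.mul hS)
  have key : A * (B * S * A * (B * S)⁻¹) = 1 := by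
    calc A * (B * S * A * (B * S)⁻¹) = A * B * (S * A) * (B * S)⁻¹ := by
          simp only [Matrix.mul_assoc]
      _ = (A * B * A.transpose) * S * (B * S)⁻¹ := by rw [← hAS]; simp only [Matrix.mul_assoc]
      _ = 1 := by rw [hAB, Matrix.mul_nonsing_inv _ hdP]
  exact (Matrix.inv_eq_right_inv key).symm
end

section
/- Let q be an odd prime power, 𝔽_q the finite field with q elements, and m ≥ 1. The number of m×m matrices B over 𝔽_q with Bᵀ = B and B invertible equals q^{m(m+1)/2 − k²} · ∏_{j=1}^{k} (q^{2j−1} − 1), where k = ⌈m/2⌉. -/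
section Aux
open Matrix

variable {F : Type*} [Field F] [Fintype F]

/-- The block matrix. -/
def blk {n : Type*} (a : F) (v : n → F) (S : Matrix n n F) : Matrix (Unit ⊕ n) (Unit ⊕ n) F :=
  fromBlocks (of fun _ _ => a) (of fun _ j => v j) (of fun i _ => v i) S

/-- number of invertible symmetric matrices -/
noncomputable def symN (F : Type*) [Field F] (n : Type*) [Fintype n] [DecidableEq n] : ℕ :=
  Nat.card {B : Matrix n n F // B.transpose = B ∧ IsUnit B}

/-- fibre count -/
noncomputable def fib {n : Type*} [Fintype n] [DecidableEq n] (a : F) (v : n → F) : ℕ :=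
  Nat.card {S : Matrix n n F // S.transpose = S ∧ IsUnit (blk a v S)}

theorem symN_congr {n p : Type*} [Fintype n] [DecidableEq n] [Fintype p] [DecidableEq p]
    (e : n ≃ p) : symN F n = symN F p := by
  refine Nat.card_congr ((Matrix.reindex e e).subtypeEquiv fun B => ?_)
  rw [Matrix.reindex_apply, Matrix.isUnit_submatrix_equiv, Matrix.transpose_submatrix]
  refine and_congr_left fun _ => ⟨fun h => by rw [h], fun h => ?_⟩
  ext i j
  have := congrFun (congrFun h (e i)) (e j)
  simpa using this

/-- decomposition -/
def decomp {n : Type*} [Fintype n] [DecidableEq n] :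
    {B : Matrix (Unit ⊕ n) (Unit ⊕ n) F // B.transpose = B ∧ IsUnit B} ≃
      Σ x : F × (n → F), {S : Matrix n n F // S.transpose = S ∧ IsUnit (blk x.1 x.2 S)} where
  toFun B := ⟨(B.1 (.inl ()) (.inl ()), fun j => B.1 (.inl ()) (.inr j)), B.1.toBlocks₂₂, by
    ext i j
    exact congrFun (congrFun B.2.1 (.inr i)) (.inr j), by
    convert B.2.2
    ext i j
    rcases i with i | i <;> rcases j with j | j
    · rfl
    · rfl
    · exact congrFun (congrFun B.2.1 (.inr i)) (.inl j)
    · rfl⟩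
  invFun x := ⟨blk x.1.1 x.1.2 x.2.1, by
    ext i j
    rcases i with i | i <;> rcases j with j | j
    · rfl
    · rfl
    · rfl
    · exact congrFun (congrFun x.2.2.1 i) j, x.2.2.2⟩
  left_inv B := by
    apply Subtype.ext
    ext i j
    rcases i with i | i <;> rcases j with j | j
    · rfl
    · rfl
    · exact congrFun (congrFun B.2.1 (.inr i)) (.inl j)
    · rfl
  right_inv x := rfl

theorem symN_sum {n : Type*} [Fintype n] [DecidableEq n] :
    symN F (Unit ⊕ n) = ∑ a : F, ∑ v : n → F, fib a v := by
  classical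
  rw [symN, Nat.card_congr decomp, Nat.card_sigma, Fintype.sum_prod_type]
  rfl

theorem fib_ne {n : Type*} [Fintype n] [DecidableEq n] {a : F} (ha : a ≠ 0) (v : n → F) :
    fib a v = symN F n := by
  refine Nat.card_congr ((Equiv.subRight (of fun i j => a⁻¹ * v i * v j)).subtypeEquiv fun S => ?_)
  have hA : (of fun _ _ => a : Matrix Unit Unit F) * (of fun _ _ => a⁻¹) = 1 := by
    ext i j; simp [mul_apply, ha]
  letI : Invertible (of fun _ _ => a : Matrix Unit Unit F) :=
    invertibleOfRightInverse _ _ hA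
  have hi : ⅟ (of fun _ _ => a : Matrix Unit Unit F) = of fun _ _ => a⁻¹ :=
    invOf_eq_right_inv hA
  rw [blk, isUnit_fromBlocks_iff_of_invertible₁₁, hi]
  refine and_congr ?_ ?_
  · have : (of fun i j => a⁻¹ * v i * v j : Matrix n n F)ᵀ = of fun i j => a⁻¹ * v i * v j := by
      ext i j; simp; ring
    rw [Equiv.subRight_apply, transpose_sub, this, sub_left_inj]
  · rw [Equiv.subRight_apply]
    apply iff_of_eq
    congr 2
    ext i j
    simp only [Matrix.sub_apply, of_apply, mul_apply, Finset.univ_unique, Finset.sum_singleton]; ring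

theorem fib_zero {n : Type*} [Fintype n] [DecidableEq n] :
    fib (0 : F) (0 : n → F) = 0 := by
  rw [fib, Nat.card_eq_zero]
  left
  refine ⟨fun ⟨S, _, h⟩ => ?_⟩
  rw [isUnit_iff_isUnit_det, isUnit_iff_ne_zero] at h
  apply h
  apply det_eq_zero_of_row_eq_zero (.inl ())
  rintro (j | j) <;> rfl

theorem fib_mulVec {n : Type*} [Fintype n] [DecidableEq n] (g : Matrix n n F) (hg : IsUnit g)
    (v : n → F) : fib (0 : F) v = fib 0 (g *ᵥ v) := by
  have hd := (isUnit_iff_isUnit_det _).1 hg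
  have hdt : IsUnit gᵀ.det := by rwa [det_transpose]
  have hgt := (isUnit_iff_isUnit_det _).2 hdt
  let e : Matrix n n F ≃ Matrix n n F :=
    { toFun := fun S => g * S * gᵀ
      invFun := fun S => g⁻¹ * S * gᵀ⁻¹
      left_inv := fun S => by
        simp [mul_assoc, Matrix.mul_nonsing_inv _ hdt, Matrix.nonsing_inv_mul_cancel_left _ _ hd]
      right_inv := fun S => by
        simp [mul_assoc, Matrix.nonsing_inv_mul _ hdt, Matrix.mul_nonsing_inv_cancel_left _ _ hd] }
  refine Nat.card_congr (e.subtypeEquiv fun S => ?_)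
  refine and_congr ?_ ?_
  · have : (e S)ᵀ = e Sᵀ := by simp [e, transpose_mul, mul_assoc]
    rw [this, e.apply_eq_iff_eq]
  · have h1 : blk 0 (g *ᵥ v) (e S) = fromBlocks 1 0 0 g * blk 0 v S * fromBlocks 1 0 0 gᵀ := by
      simp only [blk, fromBlocks_multiply, e]
      congr 1
      · ext i j; simp
      · ext i j; simp [mul_apply, mulVec, dotProduct, mul_comm]
      · ext i j; simp [mul_apply, mulVec, dotProduct]
      · simp
    have u1 : IsUnit (fromBlocks (1 : Matrix Unit Unit F) 0 0 g) := by
      rw [isUnit_iff_isUnit_det]; simpa using hd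
    have u2 : IsUnit (fromBlocks (1 : Matrix Unit Unit F) 0 0 gᵀ) := by
      rw [isUnit_iff_isUnit_det]; simpa using hd
    rw [h1]
    exact ⟨fun h => (u1.mul h).mul u2, fun h => isUnit_of_mul_isUnit_right (isUnit_of_mul_isUnit_left h)⟩

theorem blk_basis {p : Type*} [Fintype p] [DecidableEq p] (b : F) (w : p → F) (T : Matrix p p F) :
    IsUnit (blk 0 (Sum.elim (fun _ : Unit => 1) fun _ => 0) (blk b w T)) ↔ IsUnit T := by
  rw [← isUnit_submatrix_equiv (Equiv.sumAssoc Unit Unit p)]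
  let A : Matrix (Unit ⊕ Unit) (Unit ⊕ Unit) F :=
    fromBlocks (of fun _ _ => 0) (of fun _ _ => 1) (of fun _ _ => 1) (of fun _ _ => b)
  let A' : Matrix (Unit ⊕ Unit) (Unit ⊕ Unit) F :=
    fromBlocks (of fun _ _ => -b) (of fun _ _ => 1) (of fun _ _ => 1) (of fun _ _ => 0)
  have hA : A * A' = 1 := by
    ext i j
    rcases i with i | i <;> rcases j with j | j <;> simp [A, A', mul_apply]
  letI : Invertible A := invertibleOfRightInverse _ _ hA
  have hi : ⅟ A = A' := invOf_eq_right_inv hA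
  have : (blk 0 (Sum.elim (fun _ : Unit => 1) fun _ => 0) (blk b w T)).submatrix
      (Equiv.sumAssoc Unit Unit p) (Equiv.sumAssoc Unit Unit p) =
      fromBlocks A (of fun i j => Sum.elim (fun _ => 0) (fun _ => w j) i)
        (of fun i j => Sum.elim (fun _ => 0) (fun _ => w i) j) T := by
    ext i j
    rcases i with (i | i) | i <;> rcases j with (j | j) | j <;> rfl
  rw [this, isUnit_fromBlocks_iff_of_invertible₁₁, hi]
  apply iff_of_eq
  congr 1
  ext i j
  simp [mul_apply, A']

/-- decomposition of the fibre -/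
def decomp' {p : Type*} [Fintype p] [DecidableEq p] :
    {S : Matrix (Unit ⊕ p) (Unit ⊕ p) F // S.transpose = S ∧
      IsUnit (blk 0 (Sum.elim (fun _ : Unit => 1) fun _ => 0) S)} ≃
      (F × (p → F)) × {S : Matrix p p F // S.transpose = S ∧ IsUnit S} where
  toFun B := ⟨(B.1 (.inl ()) (.inl ()), fun j => B.1 (.inl ()) (.inr j)), B.1.toBlocks₂₂, by
    ext i j
    exact congrFun (congrFun B.2.1 (.inr i)) (.inr j), by
    rw [← blk_basis (B.1 (.inl ()) (.inl ())) (fun j => B.1 (.inl ()) (.inr j))]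
    convert B.2.2
    ext i j
    rcases i with i | i <;> rcases j with j | j
    · rfl
    · rfl
    · exact congrFun (congrFun B.2.1 (.inr i)) (.inl j)
    · rfl⟩
  invFun x := ⟨blk x.1.1 x.1.2 x.2.1, by
    ext i j
    rcases i with i | i <;> rcases j with j | j
    · rfl
    · rfl
    · rfl
    · exact congrFun (congrFun x.2.2.1 i) j, (blk_basis _ _ _).2 x.2.2.2⟩
  left_inv B := by
    apply Subtype.ext
    ext i j
    rcases i with i | i <;> rcases j with j | j
    · rfl
    · rfl
    · exact congrFun (congrFun B.2.1 (.inr i)) (.inl j)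
    · rfl
  right_inv x := rfl

theorem exists_g' {p : Type*} [Fintype p] [DecidableEq p] (v : Unit ⊕ p → F) (hv : v (.inl ()) ≠ 0) :
    ∃ g : Matrix (Unit ⊕ p) (Unit ⊕ p) F, IsUnit g ∧
      g *ᵥ (Sum.elim (fun _ : Unit => 1) fun _ => 0) = v := by
  refine ⟨fromBlocks (of fun _ _ => v (.inl ())) 0 (of fun i _ => v (.inr i)) 1, ?_, ?_⟩
  · rw [isUnit_iff_isUnit_det]
    simp [hv]
  · ext i
    rcases i with i | i <;> simp [mulVec, dotProduct]

theorem exists_g {p : Type*} [Fintype p] [DecidableEq p] (v : Unit ⊕ p → F) (hv : v ≠ 0) :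
    ∃ g : Matrix (Unit ⊕ p) (Unit ⊕ p) F, IsUnit g ∧
      g *ᵥ (Sum.elim (fun _ : Unit => 1) fun _ => 0) = v := by
  by_cases h0 : v (.inl ()) = 0
  · obtain ⟨i, hi⟩ := Function.ne_iff.1 hv
    rcases i with i | i
    · exact (hi h0).elim
    have hne : (Sum.inl () : Unit ⊕ p) ≠ Sum.inr i := by simp
    have hu : (transvection (Sum.inl ()) (Sum.inr i) (1 : F) *ᵥ v) (.inl ()) ≠ 0 := by
      simpa [transvection, add_mulVec, h0, single_mulVec] using hi
    obtain ⟨g, hg, h⟩ := exists_g' _ hu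
    refine ⟨transvection (Sum.inl ()) (Sum.inr i) (-1) * g, ?_, ?_⟩
    · refine IsUnit.mul ?_ hg
      rw [isUnit_iff_isUnit_det, det_transvection_of_ne _ _ hne]
      exact isUnit_one
    · rw [← mulVec_mulVec, h, mulVec_mulVec, transvection_mul_transvection_same _ _ hne]
      simp
  · exact exists_g' v h0

theorem fib_basis {p : Type*} [Fintype p] [DecidableEq p] (v : Unit ⊕ p → F) (hv : v ≠ 0) :
    fib 0 v = Fintype.card F ^ (Fintype.card p + 1) * symN F p := by
  obtain ⟨g, hg, rfl⟩ := exists_g v hv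
  rw [← fib_mulVec g hg, fib, Nat.card_congr decomp', Nat.card_prod, Nat.card_prod, symN]
  simp [Nat.card_eq_fintype_card, pow_succ']

theorem symN_rec {n : Type*} [Fintype n] [DecidableEq n] (c : ℕ)
    (hc : ∀ v : n → F, v ≠ 0 → fib 0 v = c) :
    symN F (Unit ⊕ n) = (Fintype.card F - 1) * (Fintype.card F ^ Fintype.card n * symN F n) +
      (Fintype.card F ^ Fintype.card n - 1) * c := by
  classical
  rw [symN_sum, ← Finset.add_sum_erase _ _ (Finset.mem_univ (0 : F)), add_comm]
  congr 1
  · rw [Finset.sum_congr rfl (g := fun _ => Fintype.card F ^ Fintype.card n * symN F n)]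
    · simp [Finset.card_erase_of_mem]
    · intro a ha
      rw [Finset.sum_congr rfl (fun v _ => fib_ne (Finset.ne_of_mem_erase ha) v)]
      simp
  · rw [← Finset.add_sum_erase _ _ (Finset.mem_univ (0 : n → F)), fib_zero, zero_add,
      Finset.sum_congr rfl (fun v hv => hc v (Finset.ne_of_mem_erase hv))]
    simp [Finset.card_erase_of_mem]

theorem symN_zero : symN F (Fin 0) = 1 := by
  rw [symN, Nat.card_eq_one_iff_unique]
  refine ⟨inferInstance, ⟨⟨0, Subsingleton.elim _ _, ?_⟩⟩⟩
  rw [Subsingleton.elim (0 : Matrix (Fin 0) (Fin 0) F) 1]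
  exact isUnit_one

theorem symN_one : symN F (Fin 1) = Fintype.card F - 1 := by
  rw [symN_congr (Fintype.equivOfCardEq (by simp) : Fin 1 ≃ Unit ⊕ Fin 0),
    symN_rec 0 (fun v hv => (hv (Subsingleton.elim _ _)).elim), symN_zero]
  simp

theorem symN_step (m : ℕ) : symN F (Fin (m + 2)) =
    (Fintype.card F - 1) * (Fintype.card F ^ (m + 1) * symN F (Fin (m + 1))) +
      (Fintype.card F ^ (m + 1) - 1) * (Fintype.card F ^ (m + 1) * symN F (Fin m)) := by
  rw [symN_congr (Fintype.equivOfCardEq (by simp; omega) : Fin (m + 2) ≃ Unit ⊕ (Unit ⊕ Fin m)),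
    symN_rec _ fib_basis,
    symN_congr (Fintype.equivOfCardEq (by simp; omega) : Unit ⊕ Fin m ≃ Fin (m + 1))]
  simp [add_comm]

theorem symN_both (k : ℕ) :
    symN F (Fin (2 * k)) = Fintype.card F ^ (k * k + k) *
      ∏ j ∈ Finset.range k, (Fintype.card F ^ (2 * (j + 1) - 1) - 1) ∧
    symN F (Fin (2 * k + 1)) = Fintype.card F ^ (k * k + k) *
      ∏ j ∈ Finset.range (k + 1), (Fintype.card F ^ (2 * (j + 1) - 1) - 1) := by
  obtain ⟨r, hr⟩ : ∃ r, Fintype.card F = r + 1 :=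
    ⟨_, (Nat.sub_add_cancel Fintype.card_pos).symm⟩
  have hs : ∀ l, ∃ s, Fintype.card F ^ l = s + 1 := fun l =>
    ⟨_, (Nat.sub_add_cancel (pow_pos Fintype.card_pos l)).symm⟩
  induction k with
  | zero => simp [symN_zero, symN_one]
  | succ k ih =>
    obtain ⟨h0, h1⟩ := ih
    have h2 : symN F (Fin (2 * (k + 1))) = Fintype.card F ^ ((k + 1) * (k + 1) + (k + 1)) *
      ∏ j ∈ Finset.range (k + 1), (Fintype.card F ^ (2 * (j + 1) - 1) - 1) := by
      rw [show 2 * (k + 1) = 2 * k + 2 by ring, symN_step, h0, h1, Finset.prod_range_succ]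
      rw [show 2 * (k + 1) - 1 = 2 * k + 1 by omega]
      rw [show (k + 1) * (k + 1) + (k + 1) = (k * k + k) + (2 * k + 1) + 1 by ring,
        pow_succ _ (k * k + k + (2 * k + 1)), pow_add _ (k * k + k)]
      obtain ⟨s, hs⟩ := hs (2 * k + 1)
      rw [hs, hr]
      simp only [Nat.add_sub_cancel]
      ring
    refine ⟨h2, ?_⟩
    rw [show 2 * (k + 1) + 1 = 2 * k + 1 + 2 by ring, symN_step,
      show 2 * k + 1 + 1 = 2 * (k + 1) by ring, h2, h1, Finset.prod_range_succ _ (k + 1)]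
    rw [show 2 * (k + 1 + 1) - 1 = 2 * (k + 1) + 1 by omega]
    rw [show (k + 1) * (k + 1) + (k + 1) = (k * k + k) + 2 * (k + 1) by ring, pow_add _ (k * k + k),
      pow_succ _ (2 * (k + 1))]
    obtain ⟨s, hs⟩ := hs (2 * (k + 1))
    rw [hs, hr, show (s + 1) * (r + 1) - 1 = r * (s + 1) + s by
      rw [show (s + 1) * (r + 1) = r * (s + 1) + s + 1 by ring]; rfl]
    simp only [Nat.add_sub_cancel]
    ring

end Aux

theorem stmt1 (q m : ℕ) (hq : ∃ p k, Nat.Prime p ∧ 0 < k ∧ q = p ^ k) (hodd : Odd q)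
    (F : Type*) [Field F] [Fintype F] (hF : Fintype.card F = q) (hm : 1 ≤ m) :
    Nat.card {B : Matrix (Fin m) (Fin m) F // B.transpose = B ∧ IsUnit B} =
      q ^ (m * (m + 1) / 2 - ((m + 1) / 2) ^ 2) *
        ∏ j ∈ Finset.range ((m + 1) / 2), (q ^ (2 * (j + 1) - 1) - 1) := by
  subst hF
  obtain ⟨k, rfl | rfl⟩ := m.even_or_odd'
  · rw [show (2 * k + 1) / 2 = k by omega,
      show 2 * k * (2 * k + 1) / 2 - k ^ 2 = k * k + k by
        rw [show 2 * k * (2 * k + 1) = 2 * (k * k + k + k ^ 2) by ring,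
          Nat.mul_div_cancel_left _ two_pos, Nat.add_sub_cancel]]
    exact (symN_both k).1
  · rw [show (2 * k + 1 + 1) / 2 = k + 1 by omega,
      show (2 * k + 1) * (2 * k + 1 + 1) / 2 - (k + 1) ^ 2 = k * k + k by
        rw [show (2 * k + 1) * (2 * k + 1 + 1) = 2 * (k * k + k + (k + 1) ^ 2) by ring,
          Nat.mul_div_cancel_left _ two_pos, Nat.add_sub_cancel]]
    exact (symN_both k).2
end

section
/- Let q be an odd prime power, 𝔽_q the finite field with q elements, and m ≥ 1. The number of invertible m×m matrices B over 𝔽_q with Bᵀ = −B equals 0 if m is odd, and equals q^{m(m−2)/4} · ∏_{j=1}^{m/2} (q^{2j−1} − 1) if m is even. -/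
namespace SkewCount

open Matrix

/-- Invertible skew-symmetric matrices. -/
abbrev Sk (n F : Type*) [Fintype n] [DecidableEq n] [Field F] :=
  {B : Matrix n n F // B.transpose = -B ∧ IsUnit B}

/-- Those with prescribed first row. -/
abbrev Fib {k F : Type*} [Fintype k] [DecidableEq k] [Field F] (v : k → F) :=
  {B : Sk (Unit ⊕ k) F // (fun j => B.1 (Sum.inl ()) (Sum.inr j)) = v}

theorem exists_unit_mulVec {k F : Type*} [Fintype k] [DecidableEq k] [Field F] {v w : k → F}
    (hv : v ≠ 0) (hw : w ≠ 0) : ∃ P : Matrix k k F, IsUnit P ∧ P *ᵥ v = w := by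
  let f := (LinearEquiv.toSpanNonzeroSingleton F _ v hv).symm ≪≫ₗ
    (LinearEquiv.toSpanNonzeroSingleton F _ w hw)
  obtain ⟨g, hg⟩ := Submodule.exists_linearEquiv_restrict_eq f
  have h1 : g v = w := by
    have := hg (LinearEquiv.toSpanNonzeroSingleton F _ v hv 1)
    simp only [f, LinearEquiv.trans_apply, LinearEquiv.symm_apply_apply] at this
    simpa [LinearEquiv.toSpanNonzeroSingleton_apply] using this.symm
  refine ⟨LinearMap.toMatrix' g.toLinearMap, ?_, ?_⟩
  · rw [← mulVec_injective_iff_isUnit]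
    intro x y h
    simpa [LinearMap.toMatrix'_mulVec] using h
  · rw [LinearMap.toMatrix'_mulVec]; exact h1

theorem fib_le {k F : Type*} [Fintype k] [DecidableEq k] [Field F] [Fintype F] {v w : k → F}
    (hv : v ≠ 0) (hw : w ≠ 0) : Nat.card (Fib v) ≤ Nat.card (Fib w) := by
  obtain ⟨P, hP, hPv⟩ := exists_unit_mulVec hv hw
  let Q : Matrix (Unit ⊕ k) (Unit ⊕ k) F := fromBlocks 1 0 0 P
  have hQ : IsUnit Q := by
    rw [isUnit_iff_isUnit_det] at hP ⊢
    simpa [Q] using hP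
  have hQt : IsUnit Qᵀ := by rwa [isUnit_transpose]
  refine Nat.card_le_card_of_injective
    (fun B => ⟨⟨Q * B.1.1 * Qᵀ, ?_, (hQ.mul B.1.2.2).mul hQt⟩, ?_⟩) ?_
  · simp [transpose_mul, B.1.2.1, Matrix.mul_assoc]
  · have hB (j) : B.1.1 (Sum.inl ()) (Sum.inr j) = v j := congrFun B.2 j
    rw [← hPv]
    ext j
    simp [Q, hB, Matrix.mul_apply, mulVec, dotProduct, Fintype.sum_sum_type, Matrix.one_apply, mul_comm]
  · intro B C h
    have h' : Q * B.1.1 * Qᵀ = Q * C.1.1 * Qᵀ := congrArg (fun x => x.1.1) h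
    exact Subtype.ext (Subtype.ext (hQ.mul_left_cancel (hQt.mul_right_cancel h')))

theorem diag_zero {n F : Type*} [Field F] (h2 : (2 : F) ≠ 0) {B : Matrix n n F}
    (hB : Bᵀ = -B) (i : n) : B i i = 0 := by
  have := congrFun (congrFun hB i) i
  simp only [transpose_apply, Matrix.neg_apply] at this
  have h : 2 * B i i = 0 := by linear_combination this
  exact (mul_eq_zero.1 h).resolve_left h2

theorem fib_zero {k F : Type*} [Fintype k] [DecidableEq k] [Field F] [Fintype F]
    (h2 : (2 : F) ≠ 0) : Nat.card (Fib (0 : k → F)) = 0 := by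
  have : IsEmpty (Fib (0 : k → F)) := by
    refine ⟨fun B => ?_⟩
    have h := B.1.2.2
    rw [isUnit_iff_isUnit_det, det_eq_zero_of_row_eq_zero (Sum.inl ())] at h
    · simp at h
    · rintro (j | j)
      · exact diag_zero h2 B.1.2.1 _
      · exact congrFun B.2 j
  simp

/-- Normal form matrix. -/
def M {n F : Type*} [Field F] (w : n → F) (D : Matrix n n F) :
    Matrix (Unit ⊕ (Unit ⊕ n)) (Unit ⊕ (Unit ⊕ n)) F :=
  fromBlocks 0 (fun _ => Sum.elim 1 0) (fun i _ => Sum.elim (-1) 0 i)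
    (fromBlocks 0 (fun _ => w) (fun i _ => - w i) D)

@[simp] theorem M_zz {n F : Type*} [Field F] (w : n → F) (D : Matrix n n F)
    (i : Unit) (j : Unit) : M w D (.inl i) (.inl j) = 0 := rfl

@[simp] theorem M_zo {n F : Type*} [Field F] (w : n → F) (D : Matrix n n F)
    (i : Unit) (j : Unit) : M w D (.inl i) (.inr (.inl j)) = 1 := rfl

@[simp] theorem M_zn {n F : Type*} [Field F] (w : n → F) (D : Matrix n n F)
    (i : Unit) (j : n) : M w D (.inl i) (.inr (.inr j)) = 0 := rfl

@[simp] theorem M_oz {n F : Type*} [Field F] (w : n → F) (D : Matrix n n F)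
    (i : Unit) (j : Unit) : M w D (.inr (.inl i)) (.inl j) = -1 := rfl

@[simp] theorem M_oo {n F : Type*} [Field F] (w : n → F) (D : Matrix n n F)
    (i : Unit) (j : Unit) : M w D (.inr (.inl i)) (.inr (.inl j)) = 0 := rfl

@[simp] theorem M_on {n F : Type*} [Field F] (w : n → F) (D : Matrix n n F)
    (i : Unit) (j : n) : M w D (.inr (.inl i)) (.inr (.inr j)) = w j := rfl

@[simp] theorem M_nz {n F : Type*} [Field F] (w : n → F) (D : Matrix n n F)
    (i : n) (j : Unit) : M w D (.inr (.inr i)) (.inl j) = 0 := rfl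

@[simp] theorem M_no {n F : Type*} [Field F] (w : n → F) (D : Matrix n n F)
    (i : n) (j : Unit) : M w D (.inr (.inr i)) (.inr (.inl j)) = -w i := rfl

@[simp] theorem M_nn {n F : Type*} [Field F] (w : n → F) (D : Matrix n n F)
    (i : n) (j : n) : M w D (.inr (.inr i)) (.inr (.inr j)) = D i j := rfl

theorem M_isUnit {n F : Type*} [Fintype n] [DecidableEq n] [Field F]
    (w : n → F) (D : Matrix n n F) : IsUnit (M w D) ↔ IsUnit D := by
  have key (x : Unit ⊕ (Unit ⊕ n) → F) : M w D *ᵥ x =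
      Sum.elim (fun _ => x (.inr (.inl ()))) (Sum.elim
        (fun _ => - x (.inl ()) + w ⬝ᵥ (fun j => x (.inr (.inr j))))
        (fun i => - w i * x (.inr (.inl ())) + (D *ᵥ (fun j => x (.inr (.inr j)))) i)) := by
    ext (i | i | i) <;> simp [mulVec, dotProduct, Fintype.sum_sum_type]
  rw [← mulVec_injective_iff_isUnit, ← mulVec_injective_iff_isUnit,
    ← coe_mulVecLin, ← coe_mulVecLin, injective_iff_map_eq_zero, injective_iff_map_eq_zero]
  simp only [mulVecLin_apply]
  constructor
  · intro h y hy
    have := h (Sum.elim (fun _ => w ⬝ᵥ y) (Sum.elim 0 y)) (by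
      rw [key]; ext (i | i | i) <;> simp [hy])
    ext i
    simpa using congrFun this (.inr (.inr i))
  · intro h x hx
    rw [key] at hx
    have h1 : x (.inr (.inl ())) = 0 := by simpa using congrFun hx (.inl ())
    have h3 : (fun j => x (.inr (.inr j))) = 0 := h _ (by
      ext i; simpa [h1] using congrFun hx (.inr (.inr i)))
    have h0 : x (.inl ()) = 0 := by simpa [h3] using congrFun hx (.inr (.inl ()))
    ext (i | i | i)
    · exact h0
    · exact h1
    · exact congrFun h3 i

theorem M_skew {n F : Type*} [Field F]
    (w : n → F) (D : Matrix n n F) : (M w D)ᵀ = - M w D ↔ Dᵀ = - D := by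
  constructor
  · intro h
    ext i j
    exact congrFun (congrFun h (.inr (.inr i))) (.inr (.inr j))
  · intro h
    ext (i | i | i) (j | j | j) <;> simp
    exact congrFun (congrFun h i) j

theorem fib_e {n F : Type*} [Fintype n] [DecidableEq n] [Field F] [Fintype F]
    (h2 : (2 : F) ≠ 0) :
    Nat.card (Fib (Sum.elim 1 0 : Unit ⊕ n → F)) =
      Fintype.card F ^ Fintype.card n * Nat.card (Sk n F) := by
  have e : ((n → F) × Sk n F) ≃ Fib (Sum.elim 1 0 : Unit ⊕ n → F) := by
    refine Equiv.ofBijective (fun p => ⟨⟨M p.1 p.2.1, (M_skew _ _).2 p.2.2.1,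
      (M_isUnit _ _).2 p.2.2.2⟩, ?_⟩) ⟨?_, ?_⟩
    · ext (j | j) <;> simp
    · rintro ⟨w, D⟩ ⟨w', D'⟩ h
      have h' : M w D.1 = M w' D'.1 := congrArg (fun x => x.1.1) h
      refine Prod.ext ?_ (Subtype.ext ?_)
      · ext i
        simpa using congrFun (congrFun h' (.inr (.inl ()))) (.inr (.inr i))
      · ext i j
        simpa using congrFun (congrFun h' (.inr (.inr i))) (.inr (.inr j))
    · rintro ⟨⟨B, hs, hu⟩, hB⟩
      let w : n → F := fun j => B (.inr (.inl ())) (.inr (.inr j))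
      let D : Matrix n n F := fun i j => B (.inr (.inr i)) (.inr (.inr j))
      have hs' (i j) : B j i = - B i j := congrFun (congrFun hs i) j
      have hB' (j) : B (.inl ()) (.inr j) = (Sum.elim 1 0 : Unit ⊕ n → F) j := congrFun hB j
      have hM : M w D = B := by
        ext (i | i | i) (j | j | j)
        · simp [diag_zero h2 hs]
        · simp [hB']
        · simp [hB']
        · simp [hs' (.inl ()), hB']
        · simp [diag_zero h2 hs]
        · simp [w]
        · simp [hs' (.inl ()), hB']
        · simp [w, hs' (.inr (.inl ())) (.inr (.inr i))]
        · rfl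
      refine ⟨(w, ⟨D, (M_skew w D).1 (hM ▸ hs), (M_isUnit w D).1 (hM ▸ hu)⟩), ?_⟩
      exact Subtype.ext (Subtype.ext hM)
  rw [← Nat.card_congr e, Nat.card_prod, Nat.card_eq_fintype_card, Fintype.card_fun]

theorem step {n F : Type*} [Fintype n] [DecidableEq n] [Field F] [Fintype F]
    (h2 : (2 : F) ≠ 0) :
    Nat.card (Sk (Unit ⊕ (Unit ⊕ n)) F) = (Fintype.card F ^ (Fintype.card n + 1) - 1) *
      (Fintype.card F ^ Fintype.card n * Nat.card (Sk n F)) := by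
  classical
  rw [← Nat.card_congr (Equiv.sigmaFiberEquiv (fun B : Sk (Unit ⊕ (Unit ⊕ n)) F =>
    fun j => B.1 (Sum.inl ()) (Sum.inr j))), Nat.card_sigma]
  have h1 : (Sum.elim 1 0 : Unit ⊕ n → F) ≠ 0 := fun h => by
    simpa using congrFun h (.inl ())
  rw [← Finset.add_sum_erase _ _ (Finset.mem_univ 0)]
  have hz := fib_zero (k := Unit ⊕ n) h2
  rw [hz, zero_add, Finset.sum_congr rfl (g := fun _ =>
    Fintype.card F ^ Fintype.card n * Nat.card (Sk n F))]
  · rw [Finset.sum_const, Finset.card_erase_of_mem (Finset.mem_univ _), Finset.card_univ]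
    simp [add_comm]
  · intro v hv
    have hv' : v ≠ 0 := (Finset.mem_erase.1 hv).1
    rw [← fib_e h2]
    exact le_antisymm (fib_le hv' h1) (fib_le h1 hv')

theorem card_congr {n k F : Type*} [Fintype n] [DecidableEq n] [Fintype k] [DecidableEq k]
    [Field F] (e : n ≃ k) : Nat.card (Sk n F) = Nat.card (Sk k F) := by
  refine Nat.card_congr (Equiv.subtypeEquiv (Matrix.reindex e e) fun B => ?_)
  have h : IsUnit (Matrix.reindex e e B) ↔ IsUnit B := by
    rw [isUnit_iff_isUnit_det, det_reindex_self, ← isUnit_iff_isUnit_det]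
  rw [h, transpose_reindex]
  have : -(Matrix.reindex e e B) = Matrix.reindex e e (-B) := rfl
  rw [this, (Matrix.reindex e e).injective.eq_iff]

theorem even_count {F : Type*} [Field F] [Fintype F] (h2 : (2 : F) ≠ 0) (k : ℕ) :
    Nat.card (Sk (Fin (2 * k)) F) = Fintype.card F ^ (k * (k - 1)) *
      ∏ j ∈ Finset.range k, (Fintype.card F ^ (2 * (j + 1) - 1) - 1) := by
  induction k with
  | zero =>
    have : Unique (Sk (Fin (2 * 0)) F) :=
      { default := ⟨1, by ext i; exact i.elim0, isUnit_one⟩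
        uniq := fun B => Subtype.ext (by ext i; exact i.elim0) }
    simp
  | succ k ih =>
    have e : Fin (2 * (k + 1)) ≃ Unit ⊕ (Unit ⊕ Fin (2 * k)) :=
      Fintype.equivOfCardEq (by simp; ring)
    rw [card_congr e, step h2, ih, Finset.prod_range_succ, Fintype.card_fin]
    have h3 : 2 * (k + 1) - 1 = 2 * k + 1 := by omega
    have h4 : (k + 1) * (k + 1 - 1) = 2 * k + k * (k - 1) := by
      cases k with
      | zero => rfl
      | succ k => simp only [Nat.add_sub_cancel]; ring
    rw [h3, h4, pow_add _ (2 * k) (k * (k - 1))]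
    ring

end SkewCount


/-- The number of invertible skew-symmetric `m × m` matrices over a finite field of odd
prime-power order `q` is `0` for odd `m` and `q^(m(m-2)/4) · ∏_{j=1}^{m/2} (q^(2j-1) - 1)`
for even `m`. -/
theorem stmt2 (q m : ℕ) (hq : ∃ p k, Nat.Prime p ∧ 0 < k ∧ q = p ^ k) (hodd : Odd q)
    (F : Type*) [Field F] [Fintype F] (hF : Fintype.card F = q) (hm : 1 ≤ m) :
    (Odd m → Nat.card {B : Matrix (Fin m) (Fin m) F // B.transpose = -B ∧ IsUnit B} = 0) ∧
    (Even m → Nat.card {B : Matrix (Fin m) (Fin m) F // B.transpose = -B ∧ IsUnit B} =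
      q ^ (m * (m - 2) / 4) * ∏ j ∈ Finset.range (m / 2), (q ^ (2 * (j + 1) - 1) - 1)) := by
  have h2 : (2 : F) ≠ 0 := by
    intro h
    have hc : CharP F 2 := CharTwo.of_one_ne_zero_of_two_eq_zero one_ne_zero h
    have h3 := (FiniteField.even_card_iff_char_two (F := F)).1 (ringChar.eq F 2)
    rw [hF] at h3
    have := Nat.odd_iff.1 hodd
    omega
  subst hF
  constructor
  · intro hm'
    have : IsEmpty {B : Matrix (Fin m) (Fin m) F // B.transpose = -B ∧ IsUnit B} := by
      refine ⟨fun B => ?_⟩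
      have h := B.2.2
      rw [Matrix.isUnit_iff_isUnit_det] at h
      have h1 : B.1.det = -B.1.det := by
        conv_lhs => rw [← Matrix.det_transpose, B.2.1, Matrix.det_neg, Fintype.card_fin,
          hm'.neg_one_pow, neg_one_mul]
      have h3 : 2 * B.1.det = 0 := by linear_combination h1
      exact h.ne_zero ((mul_eq_zero.1 h3).resolve_left h2)
    simp
  · rintro ⟨k, rfl⟩
    have hk : k + k = 2 * k := by ring
    rw [hk]
    have h3 : 2 * k * (2 * k - 2) / 4 = k * (k - 1) := by
      have : 2 * k * (2 * k - 2) = 4 * (k * (k - 1)) := by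
        have : 2 * k - 2 = 2 * (k - 1) := by omega
        rw [this]; ring
      rw [this]; omega
    rw [h3, Nat.mul_div_cancel_left k two_pos]
    exact SkewCount.even_count h2 k
end

section
/- Let q be an odd prime power, 𝔽_q the finite field with q elements, ε ∈ {1, −1} ⊆ 𝔽_q, and i, m ≥ 1. Let J be the i×i Jordan block with eigenvalue ε (diagonal entries ε, entries 1 on the superdiagonal, 0 elsewhere), and let A be the block-diagonal (im)×(im) matrix consisting of m diagonal copies of J. Then F(A) equals: q^{(im²+m)/2 − k²}·∏_{j=1}^{k}(q^{2j−1}−1) with k = ⌈m/2⌉, if i is odd; q^{im²/2 − m²/4}·∏_{j=1}^{m/2}(q^{2j−1}−1), if i is even and m is even; and 0, if i is even and m is odd. -/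
set_option linter.unusedSectionVars false

section count
open Matrix
variable {F : Type*} [Field F] [Fintype F]

theorem card_blocks {α β : Type*} [Fintype α] [Fintype β] [DecidableEq α] [DecidableEq β]
    (σ : F) (hσ : σ * σ = 1)
    (P : Matrix (α ⊕ β) (α ⊕ β) F → Prop) :
    Nat.card {M : Matrix (α ⊕ β) (α ⊕ β) F // Mᵀ = σ • M ∧ P M} =
    Nat.card (Σ A : {A : Matrix α α F // Aᵀ = σ • A}, Σ C : Matrix β α F,
      {D : Matrix β β F // Dᵀ = σ • D ∧ P (fromBlocks A.1 (σ • Cᵀ) C D)}) := by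
  have key : ∀ M : Matrix (α ⊕ β) (α ⊕ β) F, Mᵀ = σ • M →
      fromBlocks M.toBlocks₁₁ (σ • M.toBlocks₂₁ᵀ) M.toBlocks₂₁ M.toBlocks₂₂ = M := by
    intro M h
    have : σ • M.toBlocks₂₁ᵀ = M.toBlocks₁₂ := by
      ext a b
      have := congrFun (congrFun h (Sum.inl a)) (Sum.inr b)
      simp only [transpose_apply, Matrix.smul_apply, smul_eq_mul, toBlocks₂₁, toBlocks₁₂, of_apply] at this ⊢
      rw [this, ← mul_assoc, hσ, one_mul]
    rw [this, fromBlocks_toBlocks]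
  refine Nat.card_congr
    { toFun := fun M => ⟨⟨M.1.toBlocks₁₁, ?_⟩, M.1.toBlocks₂₁, ⟨M.1.toBlocks₂₂, ?_, ?_⟩⟩
      invFun := fun x => ⟨fromBlocks x.1.1 (σ • x.2.1ᵀ) x.2.1 x.2.2.1, ?_, x.2.2.2.2⟩
      left_inv := ?_
      right_inv := ?_ }
  · ext a b
    exact congrFun (congrFun M.2.1 (Sum.inl a)) (Sum.inl b)
  · ext a b
    exact congrFun (congrFun M.2.1 (Sum.inr a)) (Sum.inr b)
  · rw [key _ M.2.1]; exact M.2.2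
  · rw [fromBlocks_transpose, fromBlocks_smul, x.1.2, x.2.2.2.1]
    simp [smul_smul, hσ]
  · intro M
    exact Subtype.ext (key _ M.2.1)
  · rintro ⟨⟨A, hA⟩, C, ⟨D, hD⟩⟩
    rfl

theorem card_blocks_sum {α β : Type*} [Fintype α] [Fintype β] [DecidableEq α] [DecidableEq β]
    (σ : F) (hσ : σ * σ = 1) [Fintype {A : Matrix α α F // Aᵀ = σ • A}] [Fintype (Matrix β α F)]
    (P : Matrix (α ⊕ β) (α ⊕ β) F → Prop) :
    Nat.card {M : Matrix (α ⊕ β) (α ⊕ β) F // Mᵀ = σ • M ∧ P M} =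
    ∑ A : {A : Matrix α α F // Aᵀ = σ • A}, ∑ C : Matrix β α F,
      Nat.card {D : Matrix β β F // Dᵀ = σ • D ∧ P (fromBlocks A.1 (σ • Cᵀ) C D)} := by
  classical
  rw [card_blocks σ hσ, Nat.card_sigma]
  refine Finset.sum_congr rfl fun A _ => ?_
  rw [Nat.card_sigma]

/-- number of invertible `σ`-symmetric matrices -/
noncomputable def cT (σ : F) (n : Type*) [Fintype n] [DecidableEq n] : ℕ :=
  Nat.card {M : Matrix n n F // Mᵀ = σ • M ∧ IsUnit M}

theorem card_reindex {α β : Type*} [Fintype α] [Fintype β] [DecidableEq α] [DecidableEq β]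
    (σ : F) (e : α ≃ β) (P : Matrix α α F → Prop) :
    Nat.card {M : Matrix α α F // Mᵀ = σ • M ∧ P M} =
    Nat.card {M : Matrix β β F // Mᵀ = σ • M ∧ P (M.submatrix e e)} := by
  refine Nat.card_congr ((reindex e e).subtypeEquiv fun M => ?_)
  have h2 : (reindex e e M).submatrix e e = M := by ext; simp
  rw [h2]
  refine and_congr ?_ Iff.rfl
  constructor
  · intro h
    ext a b
    exact congrFun (congrFun h (e.symm a)) (e.symm b)
  · intro h
    ext a b
    simpa using congrFun (congrFun h (e a)) (e b)

theorem cT_congr {α β : Type*} [Fintype α] [Fintype β] [DecidableEq α] [DecidableEq β]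
    (σ : F) (e : α ≃ β) : cT σ α = cT σ β := by
  unfold cT
  rw [card_reindex σ e]
  simp only [isUnit_submatrix_equiv]

theorem schur_card {α β : Type*} [Fintype α] [Fintype β] [DecidableEq α] [DecidableEq β]
    (σ : F) (hσ : σ * σ = 1) (A : Matrix α α F) (hA : Aᵀ = σ • A) (hu : IsUnit A)
    (C : Matrix β α F) :
    Nat.card {D : Matrix β β F // Dᵀ = σ • D ∧ IsUnit (fromBlocks A (σ • Cᵀ) C D)} = cT σ β := by
  have : Invertible A := hu.invertible
  have hI : (⅟A)ᵀ = σ • ⅟A := by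
    rw [invOf_eq_nonsing_inv, transpose_nonsing_inv, hA]
    apply inv_eq_left_inv
    rw [smul_mul_smul_comm, hσ, one_smul, nonsing_inv_mul]
    exact (isUnit_iff_isUnit_det _).1 hu
  have hS : (C * ⅟A * (σ • Cᵀ))ᵀ = σ • (C * ⅟A * (σ • Cᵀ)) := by
    rw [transpose_mul, transpose_mul, hI]
    simp [smul_smul, hσ, Matrix.mul_assoc]
  unfold cT
  refine Nat.card_congr ((Equiv.subRight (C * ⅟A * (σ • Cᵀ))).subtypeEquiv fun D => ?_)
  rw [isUnit_fromBlocks_iff_of_invertible₁₁]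
  refine and_congr ?_ Iff.rfl
  simp only [Equiv.subRight_apply]
  rw [transpose_sub, hS, smul_sub, sub_left_inj]

theorem cT_zero (σ : F) (n : Type*) [Fintype n] [DecidableEq n] [IsEmpty n] : cT σ n = 1 := by
  unfold cT
  rw [Nat.card_eq_one_iff_unique]
  refine ⟨⟨fun a b => Subtype.ext (Subsingleton.elim _ _)⟩, ⟨⟨1, ?_, isUnit_one⟩⟩⟩
  exact Subsingleton.elim _ _

/-- scalars -/
noncomputable def cs (σ : F) : ℕ := Nat.card {A : Matrix Unit Unit F // Aᵀ = σ • A}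

theorem card_col (γ : Type*) [Fintype γ] :
    Nat.card (Matrix γ Unit F) = Fintype.card F ^ Fintype.card γ := by
  have : Nat.card (Matrix γ Unit F) = Nat.card (γ → Unit → F) := rfl
  rw [this]
  simp [Nat.card_fun, Nat.card_eq_fintype_card]

theorem card_zero_row (σ : F) (hσ : σ * σ = 1) (γ : Type*) [Fintype γ] [DecidableEq γ]
    (C : Matrix (Unit ⊕ γ) Unit F) (hC : C (Sum.inl ()) () ≠ 0) :
    Nat.card {D : Matrix (Unit ⊕ γ) (Unit ⊕ γ) F // Dᵀ = σ • D ∧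
      IsUnit (fromBlocks (0 : Matrix Unit Unit F) (σ • Cᵀ) C D)} =
      cs σ * (Fintype.card F ^ Fintype.card γ * cT σ γ) := by
  classical
  have hσ0 : σ ≠ 0 := by rintro rfl; simp at hσ
  have hcard : Nat.card (Matrix γ Unit F) = Fintype.card F ^ Fintype.card γ := card_col γ
  obtain ⟨c, hc⟩ : ∃ c, C (Sum.inl ()) () = c := ⟨_, rfl⟩
  rw [hc] at hC
  rw [card_blocks_sum σ hσ]
  have : ∀ (A : {A : Matrix Unit Unit F // Aᵀ = σ • A}) (E : Matrix γ Unit F),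
      Nat.card {D : Matrix γ γ F // Dᵀ = σ • D ∧ 
      IsUnit (fromBlocks (0 : Matrix Unit Unit F) (σ • Cᵀ) C (fromBlocks A.1 (σ • Eᵀ) E D))}
      = cT σ γ := by
    intro A E
    set A' : Matrix (Unit ⊕ Unit) (Unit ⊕ Unit) F := 
      fromBlocks 0 (of fun _ _ => σ * c) (of fun _ _ => c) A.1 with hA'
    set C' : Matrix γ (Unit ⊕ Unit) F := fromCols (of fun g _ => C (Sum.inr g) ()) E with hC'
    rw [← schur_card (β := γ) σ hσ A' ?_ ?_ C']
    · refine Nat.card_congr (Equiv.subtypeEquivRight fun D => and_congr Iff.rfl ?_)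
      rw [← isUnit_submatrix_equiv (Equiv.sumAssoc Unit Unit γ) (Equiv.sumAssoc Unit Unit γ)]
      refine Eq.to_iff (congrArg _ ?_)
      ext (a | a) (b | b)
      · rcases a with a | a <;> rcases b with b | b <;> simp [hA', hc]
      · rcases a with a | a <;> simp [hC']
      · rcases b with b | b <;> simp [hC']
      · simp
    · have h2 := A.2
      rw [hA', fromBlocks_transpose, fromBlocks_smul, h2]
      congr 1
      · simp
      · ext; simp [← mul_assoc, hσ]
    · rw [← isUnit_submatrix_equiv (Equiv.refl _) (Equiv.sumComm Unit Unit)]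
      have : A'.submatrix (Equiv.refl _) (Equiv.sumComm Unit Unit) =
          fromBlocks (of fun _ _ => σ * c) 0 A.1 (of fun _ _ => c) := by
        ext (a | a) (b | b) <;> simp [hA']
      rw [this, isUnit_fromBlocks_zero₁₂]
      simp [isUnit_iff_isUnit_det, hσ0, hC]
  simp only [this]
  simp only [Finset.sum_const, Finset.card_univ, smul_eq_mul, cs, ← Nat.card_eq_fintype_card] at hcard ⊢
  rw [hcard]

theorem cT_succ (σ : F) (hσ : σ * σ = 1) (m : ℕ) :
    cT σ (Fin (m + 2)) = (cs σ - 1) * (Fintype.card F ^ (m + 1) * cT σ (Fin (m + 1))) +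
      (Fintype.card F ^ (m + 1) - 1) * (cs σ * (Fintype.card F ^ m * cT σ (Fin m))) := by
  classical
  have e : Fin (m + 2) ≃ Unit ⊕ Fin (m + 1) := Fintype.equivOfCardEq (by simp; omega)
  rw [cT_congr σ e]
  conv_lhs => rw [cT, card_blocks_sum σ hσ]
  rw [← Finset.sum_erase_add _ _ (Finset.mem_univ (⟨0, by simp⟩ : {A : Matrix Unit Unit F // Aᵀ = σ • A}))]
  congr 1
  · rw [Finset.sum_congr rfl (g := fun _ => Fintype.card F ^ (m + 1) * cT σ (Fin (m + 1)))]
    · rw [Finset.sum_const, Finset.card_erase_of_mem (Finset.mem_univ _), Finset.card_univ, smul_eq_mul,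
        cs, Nat.card_eq_fintype_card]
    · intro A hA
      have hA0 : IsUnit A.1 := by
        have h1 : A.1 () () ≠ 0 := by
          intro h
          refine (Finset.mem_erase.1 hA).1 (Subtype.ext ?_)
          ext
          exact h
        simpa [isUnit_iff_isUnit_det] using h1
      rw [Finset.sum_congr rfl fun C _ => schur_card σ hσ A.1 A.2 hA0 C]
      rw [Finset.sum_const, Finset.card_univ, smul_eq_mul, ← Nat.card_eq_fintype_card, card_col,
        Fintype.card_fin]
  · rw [← Finset.sum_erase_add _ _ (Finset.mem_univ (0 : Matrix (Fin (m+1)) Unit F))]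
    rw [Finset.sum_congr rfl (g := fun _ => (cs σ * (Fintype.card F ^ m * cT σ (Fin m))))]
    · rw [Finset.sum_const, Finset.card_erase_of_mem (Finset.mem_univ _), Finset.card_univ, smul_eq_mul,
        ← Nat.card_eq_fintype_card, card_col, Fintype.card_fin]
      simp only [Nat.add_eq_left]
      rw [Nat.card_eq_zero]
      left
      constructor
      rintro ⟨D, hD, hu⟩
      rw [isUnit_iff_isUnit_det] at hu
      simp at hu
    · intro C hC
      obtain ⟨j, hj⟩ : ∃ j, C j () ≠ 0 := by
        by_contra! h
        refine (Finset.mem_erase.1 hC).1 ?_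
        ext a b
        exact h a
      obtain ⟨e, he⟩ : ∃ e : Fin (m + 1) ≃ Unit ⊕ Fin m, e j = Sum.inl () := by
        have e : Fin (m + 1) ≃ Unit ⊕ Fin m := Fintype.equivOfCardEq (by simp; omega)
        exact ⟨e.trans (Equiv.swap (e j) (Sum.inl ())), by simp⟩
      rw [card_reindex σ e]
      have h3 := card_zero_row σ hσ (Fin m) (C.submatrix e.symm id) (by
        rw [← he]; simpa using hj)
      rw [Fintype.card_fin] at h3
      rw [← h3]
      refine Nat.card_congr (Equiv.subtypeEquivRight fun D => and_congr Iff.rfl ?_)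
      rw [← isUnit_submatrix_equiv (Equiv.sumCongr (Equiv.refl Unit) e.symm)
        (Equiv.sumCongr (Equiv.refl Unit) e.symm)]
      refine Eq.to_iff (congrArg _ ?_)
      ext (a | a) (b | b) <;> simp

theorem cT_one (σ : F) (hσ : σ * σ = 1) : cT σ (Fin 1) = cs σ - 1 := by
  classical
  have e : Fin 1 ≃ Unit ⊕ Fin 0 := Fintype.equivOfCardEq (by simp)
  rw [cT_congr σ e]
  conv_lhs => rw [cT, card_blocks_sum σ hσ]
  rw [← Finset.sum_erase_add _ _ (Finset.mem_univ (⟨0, by simp⟩ : {A : Matrix Unit Unit F // Aᵀ = σ • A}))]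
  rw [Finset.sum_congr rfl (g := fun _ => 1)]
  · rw [Finset.sum_const, Finset.card_erase_of_mem (Finset.mem_univ _), Finset.card_univ, smul_eq_mul,
        cs, Nat.card_eq_fintype_card, mul_one]
    simp only [Nat.add_eq_left]
    refine Finset.sum_eq_zero fun C _ => ?_
    rw [Nat.card_eq_zero]
    left
    constructor
    rintro ⟨D, hD, hu⟩
    rw [Subsingleton.elim C 0, isUnit_iff_isUnit_det] at hu
    simp at hu
  · intro A hA
    have hA0 : IsUnit A.1 := by
      have h1 : A.1 () () ≠ 0 := by
        intro h
        refine (Finset.mem_erase.1 hA).1 (Subtype.ext ?_)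
        ext
        exact h
      simpa [isUnit_iff_isUnit_det] using h1
    rw [Finset.sum_congr rfl fun C _ => schur_card σ hσ A.1 A.2 hA0 C]
    rw [Finset.sum_const, Finset.card_univ, smul_eq_mul, ← Nat.card_eq_fintype_card, card_col,
      Fintype.card_fin, cT_zero]
    simp

theorem cs_one : cs (1 : F) = Fintype.card F := by
  have h := card_col (F := F) Unit
  rw [Fintype.card_unit, pow_one] at h
  rw [← h, cs]
  refine Nat.card_congr (Equiv.subtypeUnivEquiv fun A => ?_)
  ext; simp

theorem cs_neg_one (h2 : (2 : F) ≠ 0) : cs (-1 : F) = 1 := by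
  rw [cs, Nat.card_eq_one_iff_unique]
  refine ⟨⟨?_⟩, ⟨⟨0, by simp⟩⟩⟩
  have : ∀ A : Matrix Unit Unit F, Aᵀ = (-1 : F) • A → A = 0 := by
    intro A hA
    ext a b
    have := congrFun (congrFun hA a) b
    simp at this
    have h3 : (2 : F) * A a b = 0 := by linear_combination this
    simpa [h2] using h3
  intro A B
  exact Subtype.ext ((this _ A.2).trans (this _ B.2).symm)

/-- number of `σ`-symmetric matrices -/
noncomputable def cW (σ : F) (n : Type*) [Fintype n] [DecidableEq n] : ℕ :=
  Nat.card {M : Matrix n n F // Mᵀ = σ • M ∧ True}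

theorem cW_zero (σ : F) (n : Type*) [Fintype n] [DecidableEq n] [IsEmpty n] : cW σ n = 1 := by
  unfold cW
  rw [Nat.card_eq_one_iff_unique]
  refine ⟨⟨fun a b => Subtype.ext (Subsingleton.elim _ _)⟩, ⟨⟨1, ?_, trivial⟩⟩⟩
  exact Subsingleton.elim _ _

theorem cW_succ (σ : F) (hσ : σ * σ = 1) (m : ℕ) :
    cW σ (Fin (m + 1)) = cs σ * (Fintype.card F ^ m * cW σ (Fin m)) := by
  classical
  have e : Fin (m + 1) ≃ Unit ⊕ Fin m := Fintype.equivOfCardEq (by simp; omega)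
  conv_lhs => rw [cW, card_reindex σ e, card_blocks_sum σ hσ]
  have hcard : Nat.card (Matrix (Fin m) Unit F) = Fintype.card F ^ m := by
    rw [card_col, Fintype.card_fin]
  simp only [Finset.sum_const, Finset.card_univ, smul_eq_mul, cs, ← Nat.card_eq_fintype_card, cW] at hcard ⊢
  rw [hcard]

theorem cW_one (m : ℕ) : cW (1 : F) (Fin m) = Fintype.card F ^ (m * (m + 1) / 2) := by
  induction m with
  | zero => simp [cW_zero]
  | succ m ih =>
    rw [cW_succ 1 (by simp), ih, cs_one, ← pow_add, ← pow_succ']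
    congr 1
    have : (m + 1) * (m + 1 + 1) = m * (m + 1) + 2 * (m + 1) := by ring
    omega

theorem cW_mul (h2 : (2 : F) ≠ 0) (m : ℕ) :
    cW (1 : F) (Fin m) * cW (-1 : F) (Fin m) = Fintype.card F ^ (m ^ 2) := by
  induction m with
  | zero => simp [cW_zero]
  | succ m ih =>
    rw [cW_succ 1 (by simp), cW_succ (-1) (by simp), cs_one, cs_neg_one h2]
    calc _ = Fintype.card F ^ (2 * m + 1) * (cW (1 : F) (Fin m) * cW (-1 : F) (Fin m)) := by ring
      _ = _ := by rw [ih]; ring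

theorem cT_alt (h2 : (2 : F) ≠ 0) (n : ℕ) :
    cT (-1 : F) (Fin (2 * n)) = Fintype.card F ^ (n * (n - 1)) *
        ∏ j ∈ Finset.range n, (Fintype.card F ^ (2 * (j + 1) - 1) - 1) ∧
    cT (-1 : F) (Fin (2 * n + 1)) = 0 := by
  induction n with
  | zero => simp [cT_zero, cT_one, cs_neg_one h2]
  | succ n ih =>
    constructor
    · rw [show 2 * (n + 1) = 2 * n + 2 by ring, cT_succ _ (by simp), cs_neg_one h2, ih.1,
        Finset.prod_range_succ, show 2 * (n + 1) - 1 = 2 * n + 1 by omega]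
      have : (n + 1) * (n + 1 - 1) = n * (n - 1) + 2 * n := by
        cases n <;> simp; ring
      rw [this, pow_add]
      ring
    · rw [show 2 * (n + 1) + 1 = 2 * n + 1 + 2 by ring, cT_succ _ (by simp), cs_neg_one h2, ih.2]
      simp

theorem cT_sym (n : ℕ) :
    cT (1 : F) (Fin (2 * n)) = Fintype.card F ^ (n * (n + 1)) *
        ∏ j ∈ Finset.range n, (Fintype.card F ^ (2 * (j + 1) - 1) - 1) ∧
    cT (1 : F) (Fin (2 * n + 1)) = Fintype.card F ^ (n * (n + 1)) *
        ∏ j ∈ Finset.range (n + 1), (Fintype.card F ^ (2 * (j + 1) - 1) - 1) := by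
  have hpos : ∀ k, 1 ≤ Fintype.card F ^ k := fun k => Nat.one_le_pow _ _ Fintype.card_pos
  induction n with
  | zero => simp [cT_zero, cT_one, cs_one]
  | succ n ih =>
    have h1 : cT (1 : F) (Fin (2 * (n + 1))) = Fintype.card F ^ ((n + 1) * (n + 1 + 1)) *
        ∏ j ∈ Finset.range (n + 1), (Fintype.card F ^ (2 * (j + 1) - 1) - 1) := by
      rw [show 2 * (n + 1) = 2 * n + 2 by ring, cT_succ _ (by simp), cs_one, ih.1, ih.2,
        Finset.prod_range_succ, show 2 * (n + 1) - 1 = 2 * n + 1 by omega]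
      generalize ∏ j ∈ Finset.range n, (Fintype.card F ^ (2 * (j + 1) - 1) - 1) = P
      generalize Fintype.card F ^ (2 * n + 1) - 1 = Y
      obtain ⟨x, hx⟩ : ∃ x, Fintype.card F = x + 1 := ⟨Fintype.card F - 1, by have := hpos 1; rw [pow_one] at this; omega⟩
      rw [hx, Nat.add_sub_cancel]
      ring
    refine ⟨h1, ?_⟩
    rw [show 2 * (n + 1) + 1 = 2 * n + 1 + 2 by ring, cT_succ _ (by simp), cs_one, ih.2,
      show 2 * n + 1 + 1 = 2 * (n + 1) by ring, h1, Finset.prod_range_succ _ (n + 1),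
      show 2 * (n + 1 + 1) - 1 = 2 * n + 3 by omega]
    generalize ∏ j ∈ Finset.range (n + 1), (Fintype.card F ^ (2 * (j + 1) - 1) - 1) = P
    have hq := hpos 1
    have hq2 := hpos (2 * (n + 1))
    have hq3 := hpos (2 * n + 3)
    zify [hq, hq2, hq3]
    rw [pow_one] at hq
    zify [hq]
    ring
end count

section trans
open Matrix
variable {F : Type*} [Field F]

theorem transf {n : Type*} [Fintype n] [DecidableEq n] (N D Q A : Matrix n n F) (ε : F)
    (hε : ε * ε = 1) (h2 : (2 : F) ≠ 0) (hA : A = ε • 1 + N) (hD : D = (2 * ε) • 1 + N)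
    (hQ : Q * N = N * Q * D) (uQ : IsUnit Q) (uD : IsUnit D) :
    Nat.card {B : Matrix n n F // Bᵀ = B ∧ IsUnit B ∧ A * B * Aᵀ = B} =
    Nat.card {B : Matrix n n F // Bᵀ = B ∧ IsUnit B ∧ N * B + B * Nᵀ = 0} := by
  have uR : IsUnit (Q * D) := uQ.mul uD
  obtain ⟨R, hR⟩ := uR
  have hRT : IsUnit (R : Matrix n n F)ᵀ := (isUnit_transpose _).2 R.isUnit
  obtain ⟨S, hS⟩ := hRT
  have hcan : ∀ X Y : Matrix n n F, (R : Matrix n n F) * X * S = R * Y * S ↔ X = Y := by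
    intro X Y
    rw [Units.mul_left_inj, Units.mul_right_inj]
  have hST : (S : Matrix n n F)ᵀ = R := by rw [hS, transpose_transpose]
  let e : Matrix n n F ≃ Matrix n n F := (Units.mulLeft R).trans (Units.mulRight S)
  have he : ∀ B, e B = R * B * S := fun B => rfl
  refine Nat.card_congr (e.subtypeEquiv fun B => ?_)
  rw [he]
  refine and_congr ?_ (and_congr ?_ ?_)
  · rw [transpose_mul, transpose_mul, hST, ← hS, ← mul_assoc, hcan]
  · rw [Units.isUnit_mul_units, Units.isUnit_units_mul]
  · have e1 : (2 : F) • (A * B * Aᵀ - B) = N * B * Dᵀ + D * B * Nᵀ := by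
      rw [hA, hD]
      simp only [transpose_add, transpose_smul, transpose_one, add_mul, mul_add, smul_mul_assoc,
        mul_smul_comm, one_mul, mul_one, smul_add, smul_sub, smul_smul, hε]
      module
    have hQT : Nᵀ * Qᵀ = Dᵀ * Qᵀ * Nᵀ := by
      have := congrArg transpose hQ
      simpa only [transpose_mul, mul_assoc] using this
    have hND : N * D = D * N := by
      rw [hD]; simp [add_mul, mul_add]
    have e2 : N * (R * B * S) + R * B * S * Nᵀ = Q * (N * B * Dᵀ + D * B * Nᵀ) * Qᵀ := by
      rw [hS, hR, transpose_mul, mul_add, add_mul]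
      congr 1
      · calc N * (Q * D * B * (Dᵀ * Qᵀ)) = (N * Q * D) * B * Dᵀ * Qᵀ := by simp only [mul_assoc]
          _ = _ := by rw [← hQ]; simp only [mul_assoc]
      · calc Q * D * B * (Dᵀ * Qᵀ) * Nᵀ = Q * D * B * (Dᵀ * Qᵀ * Nᵀ) := by simp only [mul_assoc]
          _ = _ := by rw [← hQT]; simp only [mul_assoc]
    rw [e2, ← e1]
    obtain ⟨Q', rfl⟩ := uQ
    have uQT : IsUnit (Q' : Matrix n n F)ᵀ := (isUnit_transpose _).2 Q'.isUnit
    obtain ⟨Q'', hQ''⟩ := uQT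
    rw [← hQ'', Units.mul_left_eq_zero, Units.mul_right_eq_zero, smul_eq_zero, sub_eq_zero]
    simp [h2]

/-- nilpotent shift -/
def nN (F : Type*) [Field F] (k : ℕ) : Matrix (Fin (k + 1)) (Fin (k + 1)) F :=
  of fun a b => if (b : ℕ) = (a : ℕ) + 1 then 1 else 0

theorem nN_mul (k : ℕ) {β : Type*} (X : Matrix (Fin (k + 1)) β F) (a : Fin (k + 1)) (b : β) :
    (nN F k * X) a b = if h : (a : ℕ) + 1 < k + 1 then X ⟨a + 1, h⟩ b else 0 := by
  rw [mul_apply]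
  split_ifs with h
  · rw [Finset.sum_eq_single ⟨a + 1, h⟩]
    · simp [nN]
    · intro c _ hc
      have : (c : ℕ) ≠ a + 1 := fun h' => hc (Fin.ext h')
      simp [nN, this]
    · simp
  · refine Finset.sum_eq_zero fun c _ => ?_
    have : (c : ℕ) ≠ a + 1 := by have := c.2; omega
    simp [nN, this]

theorem upper_pow (k : ℕ) (δ : F) (n : ℕ) :
    (∀ a b : Fin (k + 1), b < a → ((δ • 1 + nN F k) ^ n) a b = 0) ∧
    ∀ a : Fin (k + 1), ((δ • 1 + nN F k) ^ n) a a = δ ^ n := by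
  have h0 : ∀ a b : Fin (k + 1), b < a → (δ • 1 + nN F k) a b = 0 := by
    intro a b h
    have h1 : (b : ℕ) ≠ a + 1 := by have : (b : ℕ) < a := h; omega
    simp [nN, h1, one_apply, h.ne']
  have h1 : ∀ a : Fin (k + 1), (δ • 1 + nN F k) a a = δ := by
    intro a
    simp [nN]
  induction n with
  | zero => 
    simp only [pow_zero]
    exact ⟨fun a b h => by simp [one_apply, h.ne'], fun a => by simp⟩
  | succ n ih =>
    refine ⟨fun a b h => ?_, fun a => ?_⟩
    · rw [pow_succ, mul_apply]
      refine Finset.sum_eq_zero fun c _ => ?_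
      rcases lt_or_ge c a with hc | hc
      · rw [ih.1 _ _ hc, zero_mul]
      · rw [h0 _ _ (h.trans_le hc), mul_zero]
    · rw [pow_succ, mul_apply, Finset.sum_eq_single a, ih.2, h1, pow_succ]
      · intro c _ hc
        rcases lt_or_gt_of_ne hc with hc | hc
        · rw [ih.1 _ _ hc, zero_mul]
        · rw [h0 _ _ hc, mul_zero]
      · simp

theorem isUnit_upper (k : ℕ) (M : Matrix (Fin (k + 1)) (Fin (k + 1)) F)
    (h : ∀ a b, b < a → M a b = 0) (h' : ∀ a, M a a ≠ 0) : IsUnit M := by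
  rw [isUnit_iff_isUnit_det, det_of_upperTriangular (fun a b hab => h a b hab), isUnit_iff_ne_zero]
  exact Finset.prod_ne_zero_iff.2 fun a _ => h' a

/-- The conjugating matrix. -/
def nQ (k : ℕ) (δ : F) : Matrix (Fin (k + 1)) (Fin (k + 1)) F :=
  of fun a b => ((δ • 1 + nN F k) ^ (k - (a : ℕ))) a b

theorem nQ_mul (k : ℕ) (δ : F) : nQ k δ * nN F k = nN F k * nQ k δ * (δ • 1 + nN F k) := by
  have hcomm : ∀ n, (δ • 1 + nN F k) ^ n * nN F k = nN F k * (δ • 1 + nN F k) ^ n := by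
    intro n
    have : Commute (δ • 1 + nN F k) (nN F k) := by
      unfold Commute SemiconjBy
      simp [add_mul, mul_add]
    exact this.pow_left n
  ext a b
  have e1 : (nQ k δ * nN F k) a b = ((δ • 1 + nN F k) ^ (k - (a : ℕ)) * nN F k) a b := by
    simp only [mul_apply, nQ, of_apply]
  rw [e1, hcomm, nN_mul, mul_assoc, nN_mul]
  split_ifs with h
  · have : k - (a : ℕ) = (k - (a + 1)) + 1 := by omega
    rw [this, pow_succ]
    simp only [mul_apply, nQ, of_apply]
  · rfl

theorem transf2 (k m : ℕ) (ε : F) (hε : ε * ε = 1) (h2 : (2 : F) ≠ 0) :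
    Nat.card {B : Matrix (Fin (k + 1) × Fin m) (Fin (k + 1) × Fin m) F // Bᵀ = B ∧ IsUnit B ∧
      blockDiagonal (fun _ : Fin m => ε • 1 + nN F k) * B *
        (blockDiagonal (fun _ : Fin m => ε • 1 + nN F k))ᵀ = B} =
    Nat.card {B : Matrix (Fin (k + 1) × Fin m) (Fin (k + 1) × Fin m) F // Bᵀ = B ∧ IsUnit B ∧
      blockDiagonal (fun _ : Fin m => nN F k) * B +
        B * (blockDiagonal (fun _ : Fin m => nN F k))ᵀ = 0} := by
  have hε0 : ε ≠ 0 := by rintro rfl; simp at hε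
  have hδ : 2 * ε ≠ 0 := mul_ne_zero h2 hε0
  have bd : ∀ c : F, blockDiagonal (fun _ : Fin m => c • 1 + nN F k) =
      c • 1 + blockDiagonal (fun _ : Fin m => nN F k) := by
    intro c
    rw [← blockDiagonal_one, ← blockDiagonal_smul, ← blockDiagonal_add]
    rfl
  have bu : ∀ M : Matrix (Fin (k + 1)) (Fin (k + 1)) F, IsUnit M →
      IsUnit (blockDiagonal (fun _ : Fin m => M)) := by
    intro M hM
    rw [isUnit_iff_isUnit_det] at hM ⊢
    rw [det_blockDiagonal]
    simpa using hM.pow m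
  refine transf _ (blockDiagonal (fun _ : Fin m => (2 * ε) • 1 + nN F k))
    (blockDiagonal (fun _ : Fin m => nQ k (2 * ε))) _ ε hε h2 (bd _) (bd _) ?_ ?_ ?_
  · rw [← blockDiagonal_mul, ← blockDiagonal_mul, ← blockDiagonal_mul]
    simp only [nQ_mul]
  · refine bu _ (isUnit_upper _ _ ?_ ?_)
    · intro a b h
      exact (upper_pow k (2 * ε) _).1 a b h
    · intro a
      simp only [nQ, of_apply, (upper_pow k (2 * ε) _).2 a]
      exact pow_ne_zero _ hδ
  · refine bu _ (isUnit_upper _ _ ?_ ?_)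
    · intro a b h
      simpa using (upper_pow k (2 * ε) 1).1 a b h
    · intro a
      have := (upper_pow k (2 * ε) 1).2 a
      rw [pow_one, pow_one] at this
      rw [this]
      exact hδ

/-- The form with given antidiagonals. -/
def nG (k m : ℕ) (C : Fin (k + 1) → Matrix (Fin m) (Fin m) F) :
    Matrix (Fin (k + 1) × Fin m) (Fin (k + 1) × Fin m) F :=
  of fun p r => if h : (p.1 : ℕ) + r.1 < k + 1 then (-1) ^ (p.1 : ℕ) * C ⟨p.1 + r.1, h⟩ p.2 r.2 else 0

theorem nG_pos (k m : ℕ) (C : Fin (k + 1) → Matrix (Fin m) (Fin m) F)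
    (p r : Fin (k + 1) × Fin m) (h : (p.1 : ℕ) + r.1 < k + 1) :
    nG k m C p r = (-1) ^ (p.1 : ℕ) * C ⟨p.1 + r.1, h⟩ p.2 r.2 := by
  simp only [nG, of_apply]
  rw [dif_pos h]

theorem nG_neg (k m : ℕ) (C : Fin (k + 1) → Matrix (Fin m) (Fin m) F)
    (p r : Fin (k + 1) × Fin m) (h : ¬ (p.1 : ℕ) + r.1 < k + 1) :
    nG k m C p r = 0 := by
  simp only [nG, of_apply]
  rw [dif_neg h]

theorem nG_unit (k m : ℕ) (C : Fin (k + 1) → Matrix (Fin m) (Fin m) F) :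
    IsUnit (nG k m C) ↔ IsUnit (C (Fin.last k)) := by
  constructor
  · intro hu
    by_contra hn
    have hdet : (C (Fin.last k)).det = 0 := by
      by_contra h
      exact hn ((isUnit_iff_isUnit_det _).2 (isUnit_iff_ne_zero.2 h))
    obtain ⟨w, hw, hw0⟩ := exists_mulVec_eq_zero_iff.2 hdet
    have hinj := mulVec_injective_iff_isUnit.2 hu
    have : (fun p : Fin (k + 1) × Fin m => if p.1 = Fin.last k then w p.2 else 0) = 0 := by
      apply hinj
      rw [mulVec_zero]
      ext ⟨a, x⟩
      simp only [mulVec, dotProduct, Fintype.sum_prod_type, Pi.zero_apply]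
      rw [Finset.sum_eq_single (Fin.last k)]
      · by_cases ha : a = 0
        · subst ha
          have := congrFun hw0 x
          simpa [mulVec, dotProduct, nG, Fin.last] using this
        · refine Finset.sum_eq_zero fun y _ => ?_
          have h1 : ¬ ((a : ℕ) + k < k + 1) := by
            have : (a : ℕ) ≠ 0 := fun h => ha (Fin.ext h)
            omega
          rw [nG_neg _ _ _ _ _ (by simpa using h1), zero_mul]
      · intro b _ hb
        simp [hb]
      · simp
    apply hw
    ext y
    simpa using congrFun this (Fin.last k, y)
  · intro hu
    rw [← mulVec_injective_iff_isUnit]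
    have hinj := mulVec_injective_iff_isUnit.2 hu
    rw [← coe_mulVecLin, ← LinearMap.ker_eq_bot, LinearMap.ker_eq_bot']
    intro v hv
    rw [mulVecLin_apply] at hv
    have key : ∀ n : ℕ, ∀ b : Fin (k + 1), (b : ℕ) = n → ∀ y, v (b, y) = 0 := by
      intro n
      induction n using Nat.strong_induction_on with
      | _ n ih =>
        intro b hb
        have hbk : (b : ℕ) < k + 1 := b.2
        have : (fun y => v (b, y)) = 0 := by
          apply hinj
          rw [mulVec_zero]
          ext x
          have h3 := congrFun hv (⟨k - n, by omega⟩, x)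
          simp only [mulVec, dotProduct, Fintype.sum_prod_type, Pi.zero_apply] at h3 ⊢
          rw [Finset.sum_eq_single b] at h3
          · have h4 : k - n + (b : ℕ) = k := by omega
            have h5 : (∑ y, nG k m C (⟨k - n, by omega⟩, x) (b, y) * v (b, y)) =
                (-1) ^ (k - n) * ∑ y, C (Fin.last k) x y * v (b, y) := by
              rw [Finset.mul_sum]
              refine Finset.sum_congr rfl fun y _ => ?_
              simp [nG, h4, Fin.last, mul_assoc]
            rw [h5] at h3
            simpa using h3
          · intro c _ hc
            refine Finset.sum_eq_zero fun y _ => ?_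
            have hc' : (c : ℕ) ≠ b := fun h => hc (Fin.ext h)
            rcases lt_or_gt_of_ne hc' with h | h
            · rw [ih c (by omega) c rfl, mul_zero]
            · have : ¬ (k - n + (c : ℕ) < k + 1) := by omega
              rw [nG_neg _ _ _ _ _ this, zero_mul]
          · simp
        exact fun y => congrFun this y
    ext ⟨b, y⟩
    exact key b b rfl y

theorem shift_entry (k m : ℕ) (M : Matrix (Fin (k + 1) × Fin m) (Fin (k + 1) × Fin m) F)
    (p r : Fin (k + 1) × Fin m) :
    (blockDiagonal (fun _ : Fin m => nN F k) * M) p r =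
      if h : (p.1 : ℕ) + 1 < k + 1 then M (⟨p.1 + 1, h⟩, p.2) r else 0 := by
  rw [mul_apply, Fintype.sum_prod_type_right, Finset.sum_eq_single p.2]
  · simp only [blockDiagonal_apply, if_true]
    have := nN_mul (F := F) k (of fun a (_ : Unit) => M (a, p.2) r) p.1 ()
    simpa [mul_apply] using this
  · intro y _ hy
    refine Finset.sum_eq_zero fun a _ => ?_
    simp [blockDiagonal_apply, hy.symm]
  · simp

theorem shift_entry' (k m : ℕ) (M : Matrix (Fin (k + 1) × Fin m) (Fin (k + 1) × Fin m) F)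
    (p r : Fin (k + 1) × Fin m) :
    (M * (blockDiagonal (fun _ : Fin m => nN F k))ᵀ) p r =
      if h : (r.1 : ℕ) + 1 < k + 1 then M p (⟨r.1 + 1, h⟩, r.2) else 0 := by
  have := shift_entry k m Mᵀ r p
  rw [← transpose_apply (M * _), transpose_mul, transpose_transpose, this]
  rfl

theorem nG_of (k m : ℕ) (M : Matrix (Fin (k + 1) × Fin m) (Fin (k + 1) × Fin m) F)
    (h : blockDiagonal (fun _ : Fin m => nN F k) * M +
        M * (blockDiagonal (fun _ : Fin m => nN F k))ᵀ = 0) :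
    nG k m (fun s => of fun x y => M (0, x) (s, y)) = M := by
  ext ⟨a, x⟩ ⟨b, y⟩
  let f : ℕ → ℕ → F := fun a b => if h : a < k + 1 ∧ b < k + 1 then M (⟨a, h.1⟩, x) (⟨b, h.2⟩, y) else 0
  have hf : ∀ a b, f (a + 1) b = - f a (b + 1) := by
    intro a b
    by_cases ha : a < k + 1
    · by_cases hb : b < k + 1
      · have h1 := congrFun (congrFun h (⟨a, ha⟩, x)) (⟨b, hb⟩, y)
        rw [Matrix.add_apply, shift_entry, shift_entry'] at h1
        simp only [f, ha, hb, and_true, true_and]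
        rw [Matrix.zero_apply] at h1
        exact eq_neg_of_add_eq_zero_left h1
      · have : ¬ (b + 1 < k + 1) := by omega
        simp only [f]; rw [dif_neg (by omega), dif_neg (by omega), neg_zero]
    · simp only [f]; rw [dif_neg (by omega), dif_neg (by omega), neg_zero]
  have hf2 : ∀ a b, f a b = (-1) ^ a * f 0 (a + b) := by
    intro a
    induction a with
    | zero => simp
    | succ a ih =>
      intro b
      rw [hf, ih, show a + (b + 1) = a + 1 + b by ring, pow_succ]
      ring
  have h1 := hf2 a b
  have h2 : f a b = M (a, x) (b, y) := by simp only [f]; rw [dif_pos ⟨a.2, b.2⟩]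
  rw [← h2, h1]
  simp only [nG, of_apply, f]
  split_ifs with h3 h4 h4
  · rfl
  · simp at h4; omega
  · simp at h4; omega
  · simp

theorem nG_transpose (k m : ℕ) (C : Fin (k + 1) → Matrix (Fin m) (Fin m) F)
    (hC : ∀ s, (C s)ᵀ = ((-1 : F) ^ (s : ℕ)) • C s) : (nG k m C)ᵀ = nG k m C := by
  ext ⟨a, x⟩ ⟨b, y⟩
  simp only [transpose_apply, nG, of_apply]
  by_cases h : (a : ℕ) + b < k + 1
  · have h' : (b : ℕ) + a < k + 1 := by omega
    rw [dif_pos h, dif_pos h']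
    have e : (⟨b + a, h'⟩ : Fin (k + 1)) = ⟨a + b, h⟩ := Fin.ext (by simp; omega)
    rw [e]
    have h2 := congrFun (congrFun (hC ⟨a + b, h⟩) x) y
    rw [transpose_apply, Matrix.smul_apply, smul_eq_mul] at h2
    rw [h2, ← mul_assoc]
    congr 1
    simp only
    rw [pow_add, mul_left_comm, ← mul_pow]
    simp
  · have h' : ¬ (b : ℕ) + a < k + 1 := by omega
    rw [dif_neg h, dif_neg h']

theorem nG_shift (k m : ℕ) (C : Fin (k + 1) → Matrix (Fin m) (Fin m) F) :
    blockDiagonal (fun _ : Fin m => nN F k) * nG k m C +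
        nG k m C * (blockDiagonal (fun _ : Fin m => nN F k))ᵀ = 0 := by
  ext ⟨a, x⟩ ⟨b, y⟩
  rw [Matrix.add_apply, shift_entry, shift_entry', Matrix.zero_apply]
  simp only [nG, of_apply]
  have ha := a.2
  have hb := b.2
  by_cases h : (a : ℕ) + b + 1 < k + 1
  · have h1 : (a : ℕ) + 1 < k + 1 := by omega
    have h2 : (b : ℕ) + 1 < k + 1 := by omega
    have h3 : (a : ℕ) + 1 + b < k + 1 := by omega
    have h4 : (a : ℕ) + (b + 1) < k + 1 := by omega
    rw [dif_pos h1, dif_pos h2, dif_pos h3, dif_pos h4]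
    have e : (⟨a + 1 + b, h3⟩ : Fin (k + 1)) = ⟨a + (b + 1), h4⟩ := Fin.ext (by simp; omega)
    rw [e, pow_succ]
    ring
  · have h3 : ¬ (a : ℕ) + 1 + b < k + 1 := by omega
    have h4 : ¬ (a : ℕ) + (b + 1) < k + 1 := by omega
    simp [h3, h4]

theorem count_antidiag (k m : ℕ) :
    Nat.card {B : Matrix (Fin (k + 1) × Fin m) (Fin (k + 1) × Fin m) F // Bᵀ = B ∧ IsUnit B ∧
      blockDiagonal (fun _ : Fin m => nN F k) * B +
        B * (blockDiagonal (fun _ : Fin m => nN F k))ᵀ = 0} =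
    ∏ s : Fin (k + 1), Nat.card {C : Matrix (Fin m) (Fin m) F //
      Cᵀ = ((-1 : F) ^ (s : ℕ)) • C ∧ (s = Fin.last k → IsUnit C)} := by
  rw [← Nat.card_pi]
  refine Nat.card_congr
    { toFun := fun M s => ⟨of fun x y => M.1 (0, x) (s, y), ?_, ?_⟩
      invFun := fun C => ⟨nG k m (fun s => (C s).1), ?_, ?_, ?_⟩
      left_inv := ?_
      right_inv := ?_ }
  · have h1 := nG_of k m M.1 M.2.2.2
    ext x y
    have h2 := congrFun (congrFun h1 (s, x)) (0, y)
    have h3 := congrFun (congrFun M.2.1 (0, y)) (s, x)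
    rw [transpose_apply] at h3
    simp only [transpose_apply, of_apply, Matrix.smul_apply, smul_eq_mul]
    rw [← h3, ← h2, nG_pos _ _ _ _ _ (show (s : ℕ) + ((0 : Fin (k + 1)) : ℕ) < k + 1 from s.2)]
    simp
  · rintro rfl
    have h1 := nG_of k m M.1 M.2.2.2
    have h2 := M.2.2.1
    rw [← h1, nG_unit] at h2
    exact h2
  · exact nG_transpose _ _ _ fun s => (C s).2.1
  · rw [nG_unit]
    exact (C _).2.2 rfl
  · exact nG_shift _ _ _
  · intro M
    exact Subtype.ext (nG_of k m M.1 M.2.2.2)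
  · intro C
    funext s
    apply Subtype.ext
    ext x y
    simp only [of_apply]
    rw [nG_pos _ _ _ _ _ (show ((0 : Fin (k + 1)) : ℕ) + (s : ℕ) < k + 1 from (Nat.zero_add (s : ℕ)).symm ▸ s.2)]
    have e : ∀ h, (⟨((0 : Fin (k + 1)) : ℕ) + (s : ℕ), h⟩ : Fin (k + 1)) = s :=
      fun h => Fin.ext (Nat.zero_add _)
    have e2 := congrArg (fun t => (C t).1 x y) (e (by rw [Fin.val_zero, Nat.zero_add]; exact s.2))
    simpa using e2


theorem pow_even_aux {F : Type*} [Field F] (l : ℕ) : (-1 : F) ^ (2 * l) = 1 := by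
  rw [pow_mul, neg_one_sq, one_pow]

theorem pow_odd_aux {F : Type*} [Field F] (l : ℕ) : (-1 : F) ^ (2 * l + 1) = -1 := by
  rw [pow_succ, pow_even_aux, one_mul]

theorem prodW {F : Type*} [Field F] [Fintype F] (h2 : (2 : F) ≠ 0) (m l : ℕ) :
    ∏ s ∈ Finset.range (2 * l), cW ((-1 : F) ^ s) (Fin m) = Fintype.card F ^ (m ^ 2 * l) := by
  induction l with
  | zero => simp
  | succ l ih =>
    rw [show 2 * (l + 1) = 2 * l + 1 + 1 by ring, Finset.prod_range_succ, Finset.prod_range_succ, ih,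
      pow_even_aux, pow_odd_aux, mul_assoc, cW_mul h2]
    ring

theorem count_main {F : Type*} [Field F] [Fintype F] (h2 : (2 : F) ≠ 0)
    (ε : F) (hε : ε * ε = 1) (k m : ℕ) :
    Nat.card {B : Matrix (Fin (k + 1) × Fin m) (Fin (k + 1) × Fin m) F // Bᵀ = B ∧ IsUnit B ∧
      blockDiagonal (fun _ : Fin m => ε • 1 + nN F k) * B *
        (blockDiagonal (fun _ : Fin m => ε • 1 + nN F k))ᵀ = B} =
    (∏ s ∈ Finset.range k, cW ((-1 : F) ^ s) (Fin m)) * cT ((-1 : F) ^ k) (Fin m) := by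
  rw [transf2 k m ε hε h2, count_antidiag, Fin.prod_univ_castSucc, Finset.prod_range]
  congr 1
  · refine Finset.prod_congr rfl fun s _ => ?_
    rw [cW]
    refine Nat.card_congr (Equiv.subtypeEquivRight fun D => ?_)
    simp [(Fin.castSucc_lt_last s).ne]
  · rw [cT]
    refine Nat.card_congr (Equiv.subtypeEquivRight fun D => ?_)
    simp

end trans

/-- The value of the counting function `F` on a block-diagonal sum of `m` copies of the
`i × i` Jordan block with eigenvalue `ε ∈ {1, -1}`, over a finite field of odd
prime-power order `q`. -/
theorem stmt3 (q : ℕ) (hq : ∃ p k, Nat.Prime p ∧ 0 < k ∧ q = p ^ k) (hodd : Odd q)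
    (F : Type*) [Field F] [Fintype F] (hF : Fintype.card F = q)
    (ε : F) (hε : ε = 1 ∨ ε = -1) (i m : ℕ) (hi : 1 ≤ i) (hm : 1 ≤ m) :
    let J : Matrix (Fin i) (Fin i) F :=
      Matrix.of fun a b => if a = b then ε else if (b : ℕ) = (a : ℕ) + 1 then 1 else 0
    let A : Matrix (Fin i × Fin m) (Fin i × Fin m) F :=
      Matrix.blockDiagonal fun _ : Fin m => J
    let FA : ℕ := Nat.card {B : Matrix (Fin i × Fin m) (Fin i × Fin m) F //
      B.transpose = B ∧ IsUnit B ∧ A * B * A.transpose = B}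
    (Odd i → FA = q ^ ((i * m ^ 2 + m) / 2 - ((m + 1) / 2) ^ 2) *
        ∏ j ∈ Finset.range ((m + 1) / 2), (q ^ (2 * (j + 1) - 1) - 1)) ∧
    (Even i → Even m → FA = q ^ (i * m ^ 2 / 2 - m ^ 2 / 4) *
        ∏ j ∈ Finset.range (m / 2), (q ^ (2 * (j + 1) - 1) - 1)) ∧
    (Even i → Odd m → FA = 0) := by
  have h2 : (2 : F) ≠ 0 := by
    intro h
    have h0 := Nat.cast_card_eq_zero F
    rw [hF] at h0
    obtain ⟨j, rfl⟩ := hodd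
    push_cast at h0
    rw [h] at h0
    simp at h0
  have hεε : ε * ε = 1 := by rcases hε with rfl | rfl <;> simp
  obtain ⟨k, rfl⟩ : ∃ k, i = k + 1 := ⟨i - 1, by omega⟩
  intro J A FA
  have hJ : J = ε • 1 + nN F k := by
    ext a b
    by_cases h : a = b
    · subst h
      simp [J, nN]
    · simp [J, nN, h, Matrix.one_apply]
  have hFA : FA = (∏ s ∈ Finset.range k, cW ((-1 : F) ^ s) (Fin m)) * cT ((-1 : F) ^ k) (Fin m) := by
    rw [← count_main h2 ε hεε k m, ← hJ]
  rw [hFA]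
  clear hFA
  subst hF
  refine ⟨fun ho => ?_, fun he hme => ?_, fun he hmo => ?_⟩
  · obtain ⟨l, hl⟩ := ho
    obtain rfl : k = 2 * l := by omega
    rw [prodW h2, pow_even_aux]
    rcases Nat.even_or_odd' m with ⟨n, rfl | rfl⟩
    · rw [(cT_sym n).1, ← mul_assoc, ← pow_add, show (2 * n + 1) / 2 = n by omega]
      congr 2
      have : (2 * l + 1) * (2 * n) ^ 2 + 2 * n = 2 * ((2 * n) ^ 2 * l + n * (n + 1) + n ^ 2) := by ring
      rw [this]
      omega
    · rw [(cT_sym n).2, ← mul_assoc, ← pow_add, show (2 * n + 1 + 1) / 2 = n + 1 by omega]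
      congr 2
      have : (2 * l + 1) * (2 * n + 1) ^ 2 + (2 * n + 1) =
        2 * ((2 * n + 1) ^ 2 * l + n * (n + 1) + (n + 1) ^ 2) := by ring
      rw [this]
      omega
  · obtain ⟨l, rfl⟩ : ∃ l, k = 2 * l + 1 := by
      obtain ⟨l, hl⟩ := he
      exact ⟨l - 1, by omega⟩
    obtain ⟨n, rfl⟩ := even_iff_exists_two_mul.1 hme
    rw [Finset.prod_range_succ, prodW h2, pow_even_aux, pow_odd_aux,
      cW_one, (cT_alt h2 n).1, ← mul_assoc, ← pow_add, ← pow_add, show 2 * n / 2 = n by omega]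
    congr 2
    have e1 : (2 * l + 1 + 1) * (2 * n) ^ 2 = 2 * ((2 * n) ^ 2 * l + 4 * n ^ 2) := by ring
    have e2 : (2 * n) ^ 2 = 4 * n ^ 2 := by ring
    have e3 : 2 * n * (2 * n + 1) = 2 * (2 * n ^ 2 + n) := by ring
    have e4 : n * (n - 1) + n = n ^ 2 := by
      cases n
      · simp
      · simp; ring
    rw [e1, e3, e2]
    omega
  · obtain ⟨l, rfl⟩ : ∃ l, k = 2 * l + 1 := by
      obtain ⟨l, hl⟩ := he
      exact ⟨l - 1, by omega⟩
    obtain ⟨n, rfl⟩ := hmo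
    rw [pow_odd_aux, (cT_alt h2 n).2, mul_zero]
end

section
/- Let 𝔽_q be a finite field with q elements, n ≥ 1, and A an invertible n×n matrix over 𝔽_q such that the characteristic polynomials of A and of A⁻¹ are coprime in 𝔽_q[X]. Let t be the 2n×2n block-diagonal matrix with diagonal blocks A and (Aᵀ)⁻¹. Then the number of 2n×2n matrices B over 𝔽_q with Bᵀ = B, B invertible, and t·B·tᵀ = B equals the number of invertible n×n matrices Q over 𝔽_q with Q·A = A·Q (the order of the centralizer of A in GL_n(𝔽_q)). -/
open Matrix Polynomial in
theorem sylv_aeval {n : ℕ} {F : Type*} [Field F] (M N X : Matrix (Fin n) (Fin n) F)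
    (h : M * X = X * N) (p : F[X]) : aeval M p * X = X * aeval N p := by
  induction p using Polynomial.induction_on' with
  | add p q hp hq => simp only [map_add, add_mul, mul_add, hp, hq]
  | monomial k a =>
    have hk : ∀ k : ℕ, M ^ k * X = X * N ^ k := by
      intro k
      induction k with
      | zero => simp
      | succ k ih => rw [pow_succ', mul_assoc, ih, ← mul_assoc, h, mul_assoc, ← pow_succ']
    rw [aeval_monomial, aeval_monomial, mul_assoc, hk, ← mul_assoc, Algebra.commutes, mul_assoc]

open Matrix Polynomial in
theorem sylv_zero {n : ℕ} {F : Type*} [Field F] (M N X : Matrix (Fin n) (Fin n) F)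
    (h : M * X = X * N) (hc : IsCoprime M.charpoly N.charpoly) : X = 0 := by
  obtain ⟨u, v, huv⟩ := hc
  have h1 := sylv_aeval M N X h (u * M.charpoly)
  have h2 : X * aeval N (u * M.charpoly + v * N.charpoly) = X := by rw [huv]; simp
  rw [map_add, mul_add, ← h1, map_mul, map_mul, aeval_self_charpoly, aeval_self_charpoly] at h2
  simpa using h2.symm

open Matrix in
theorem isUnit_antidiag {n : ℕ} {F : Type*} [Field F] (Q : Matrix (Fin n) (Fin n) F) :
    IsUnit (fromBlocks 0 Q Qᵀ 0) ↔ IsUnit Q := by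
  rw [← isUnit_pow_iff (two_ne_zero), pow_two, fromBlocks_multiply]
  simp only [isUnit_iff_isUnit_det, Matrix.mul_zero, Matrix.zero_mul, zero_add, add_zero,
    det_fromBlocks_zero₂₁, det_mul, det_transpose, IsUnit.mul_iff, and_self]

open Matrix in
theorem antidiag_inv {n : ℕ} {F : Type*} [Field F] (A Q : Matrix (Fin n) (Fin n) F)
    (hA : IsUnit A) : A * Q * A⁻¹ = Q ↔ Q * A = A * Q := by
  have hd := (isUnit_iff_isUnit_det A).1 hA
  constructor
  · intro h
    nth_rewrite 1 [← h]
    rw [mul_assoc, nonsing_inv_mul _ hd, mul_one]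
  · intro h
    rw [← h, mul_assoc, mul_nonsing_inv _ hd, mul_one]

open Matrix in
theorem block_char {n : ℕ} {F : Type*} [Field F] (A : Matrix (Fin n) (Fin n) F) (hA : IsUnit A)
    (hcop : IsCoprime (Matrix.charpoly A) (Matrix.charpoly A⁻¹))
    (P Q R S : Matrix (Fin n) (Fin n) F) :
    ((fromBlocks P Q R S)ᵀ = fromBlocks P Q R S ∧
      fromBlocks A 0 0 (Aᵀ)⁻¹ * fromBlocks P Q R S * (fromBlocks A 0 0 (Aᵀ)⁻¹)ᵀ
        = fromBlocks P Q R S) ↔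
    (P = 0 ∧ S = 0 ∧ R = Qᵀ ∧ Q * A = A * Q) := by
  have hd := (isUnit_iff_isUnit_det A).1 hA
  have hd' : IsUnit (Aᵀ).det := by rwa [det_transpose]
  rw [← antidiag_inv A Q hA, fromBlocks_transpose, fromBlocks_transpose, fromBlocks_multiply,
    fromBlocks_multiply, fromBlocks_inj, fromBlocks_inj]
  simp only [Matrix.mul_zero, Matrix.zero_mul, zero_add, add_zero, transpose_zero,
    transpose_nonsing_inv, transpose_transpose]
  constructor
  · rintro ⟨⟨-, -, h3, -⟩, e1, e2, -, e4⟩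
    refine ⟨?_, ?_, h3.symm, e2⟩
    · apply sylv_zero A (Aᵀ)⁻¹ P
      · nth_rewrite 2 [← e1]
        rw [mul_assoc (A * P), mul_nonsing_inv _ hd', mul_one]
      · rwa [← transpose_nonsing_inv, charpoly_transpose]
    · apply sylv_zero (Aᵀ)⁻¹ A S
      · nth_rewrite 2 [← e4]
        rw [mul_assoc (_ * S), nonsing_inv_mul _ hd, mul_one]
      · rw [← transpose_nonsing_inv, charpoly_transpose]
        exact hcop.symm
  · rintro ⟨rfl, rfl, rfl, h⟩
    refine ⟨by simp, by simp, h, ?_, by simp⟩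
    have := congrArg transpose h
    simpa [transpose_mul, transpose_nonsing_inv, mul_assoc] using this

/-- If the characteristic polynomials of `A` and `A⁻¹` are coprime, then the number of
invertible symmetric matrices preserved by `t = A ⊕ (Aᵀ)⁻¹` equals the order of the
centralizer of `A` in `GL_n(𝔽_q)`. -/
theorem stmt4 (q n : ℕ) (hn : 1 ≤ n) (F : Type*) [Field F] [Fintype F]
    (hF : Fintype.card F = q)
    (A : Matrix (Fin n) (Fin n) F) (hA : IsUnit A)
    (hcop : IsCoprime (Matrix.charpoly A) (Matrix.charpoly A⁻¹)) :
    Nat.card {B : Matrix (Fin n ⊕ Fin n) (Fin n ⊕ Fin n) F //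
        B.transpose = B ∧ IsUnit B ∧
        (Matrix.fromBlocks A 0 0 (A.transpose)⁻¹) * B *
          (Matrix.fromBlocks A 0 0 (A.transpose)⁻¹).transpose = B} =
      Nat.card {Q : Matrix (Fin n) (Fin n) F // IsUnit Q ∧ Q * A = A * Q} := by
  symm
  refine Nat.card_congr (Equiv.ofBijective
    (fun Q => ⟨Matrix.fromBlocks 0 Q.1 Q.1.transpose 0, ?_⟩) ⟨?_, ?_⟩)
  · have h := (block_char A hA hcop 0 Q.1 Q.1.transpose 0).2 ⟨rfl, rfl, rfl, Q.2.2⟩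
    exact ⟨h.1, (isUnit_antidiag Q.1).2 Q.2.1, h.2⟩
  · intro Q Q' h
    exact Subtype.ext (Matrix.fromBlocks_inj.1 (congrArg Subtype.val h)).2.1
  · rintro ⟨B, h1, h2, h3⟩
    obtain ⟨P, Q, R, S, rfl⟩ : ∃ P Q R S, B = Matrix.fromBlocks P Q R S :=
      ⟨_, _, _, _, (Matrix.fromBlocks_toBlocks B).symm⟩
    obtain ⟨rfl, rfl, rfl, h⟩ := (block_char A hA hcop P Q R S).1 ⟨h1, h3⟩
    exact ⟨⟨Q, (isUnit_antidiag Q).1 h2, h⟩, rfl⟩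
end

section
/- Let 𝔽_q be a finite field with q elements, let A be an invertible a×a matrix and A' an invertible b×b matrix over 𝔽_q, and suppose the characteristic polynomial of A' is coprime in 𝔽_q[X] to the characteristic polynomial of A⁻¹. Let t be the (a+b)×(a+b) block-diagonal matrix with diagonal blocks A and A'. Then F(t) = F(A) · F(A'). -/
open Polynomial in
theorem intertwine_zero {F : Type*} [Field F] {a b : ℕ}
    (M : Matrix (Fin a) (Fin a) F) (N : Matrix (Fin b) (Fin b) F)
    (X : Matrix (Fin a) (Fin b) F) (h : M * X = X * N)
    (hc : IsCoprime N.charpoly M.charpoly) : X = 0 := by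
  have key : ∀ p : F[X], aeval M p * X = X * aeval N p := by
    intro p
    induction p using Polynomial.induction_on' with
    | add p r hp hr => simp [add_mul, mul_add, Matrix.add_mul, Matrix.mul_add, hp, hr]
    | monomial n c =>
      have hpow : M ^ n * X = X * N ^ n := by
        induction n with
        | zero => simp
        | succ n ih =>
          rw [pow_succ, Matrix.mul_assoc, h, ← Matrix.mul_assoc, ih, Matrix.mul_assoc, pow_succ]
      simp only [aeval_monomial, ← Algebra.smul_def, Matrix.smul_mul, Matrix.mul_smul, hpow]
  obtain ⟨u, v, huv⟩ := hc
  have h1 := key (u * N.charpoly)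
  rw [map_mul (aeval N), Matrix.aeval_self_charpoly, mul_zero, Matrix.mul_zero] at h1
  have h2 : aeval M (u * N.charpoly) = 1 := by
    have := congrArg (aeval M) huv
    rwa [map_add, map_mul (aeval M) v, Matrix.aeval_self_charpoly, mul_zero, add_zero,
      map_one] at this
  rwa [h2, Matrix.one_mul] at h1

/-- Multiplicativity of the counting function `F` on block-diagonal sums whose blocks have
coprime "symmetrized" characteristic polynomials. -/
theorem stmt5 (q a b : ℕ) (F : Type*) [Field F] [Fintype F] (hF : Fintype.card F = q)
    (A : Matrix (Fin a) (Fin a) F) (hA : IsUnit A)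
    (A' : Matrix (Fin b) (Fin b) F) (hA' : IsUnit A')
    (hcop : IsCoprime (Matrix.charpoly A') (Matrix.charpoly A⁻¹)) :
    Nat.card {B : Matrix (Fin a ⊕ Fin b) (Fin a ⊕ Fin b) F //
        B.transpose = B ∧ IsUnit B ∧
        (Matrix.fromBlocks A 0 0 A') * B * (Matrix.fromBlocks A 0 0 A').transpose = B} =
      Nat.card {B : Matrix (Fin a) (Fin a) F //
        B.transpose = B ∧ IsUnit B ∧ A * B * A.transpose = B} *
      Nat.card {B : Matrix (Fin b) (Fin b) F //
        B.transpose = B ∧ IsUnit B ∧ A' * B * A'.transpose = B} := by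
  rw [← Nat.card_prod]
  symm
  refine Nat.card_congr (Equiv.ofBijective (fun p => ⟨Matrix.fromBlocks p.1.1 0 0 p.2.1, ?_⟩) ⟨?_, ?_⟩)
  · obtain ⟨⟨B, h1, h2, h3⟩, ⟨C, k1, k2, k3⟩⟩ := p
    refine ⟨?_, ?_, ?_⟩
    · simp [Matrix.fromBlocks_transpose, h1, k1]
    · exact Matrix.isUnit_fromBlocks_zero₁₂.2 ⟨h2, k2⟩
    · simp [Matrix.fromBlocks_transpose, Matrix.fromBlocks_multiply, h3, k3]
  · rintro ⟨⟨B, hB⟩, ⟨C, hC⟩⟩ ⟨⟨B', hB'⟩, ⟨C', hC'⟩⟩ h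
    have h' := congrArg Subtype.val h
    obtain ⟨e1, -, -, e2⟩ := Matrix.fromBlocks_inj.1 h'
    simp only at e1 e2
    subst e1 e2
    rfl
  · rintro ⟨B, h1, h2, h3⟩
    obtain ⟨P, X, Y, Q, rfl⟩ : ∃ P X Y Q, B = Matrix.fromBlocks P X Y Q :=
      ⟨_, _, _, _, (Matrix.fromBlocks_toBlocks B).symm⟩
    rw [Matrix.fromBlocks_transpose, Matrix.fromBlocks_inj] at h1
    obtain ⟨s1, s2, s3, s4⟩ := h1
    simp only [Matrix.fromBlocks_transpose, Matrix.fromBlocks_multiply, Matrix.transpose_zero,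
      Matrix.zero_mul, Matrix.mul_zero, add_zero, zero_add, Matrix.fromBlocks_inj] at h3
    obtain ⟨t1, t2, t3, t4⟩ := h3
    have hX : X = 0 := by
      refine intertwine_zero A⁻¹ A'.transpose X ?_ (by rwa [Matrix.charpoly_transpose])
      have hd := (Matrix.isUnit_iff_isUnit_det A).1 hA
      conv_lhs => rw [← t2]
      rw [Matrix.mul_assoc, Matrix.nonsing_inv_mul_cancel_left _ _ hd]
    subst hX
    have hY : Y = 0 := by simpa using s3.symm
    subst hY
    obtain ⟨u1, u2⟩ := Matrix.isUnit_fromBlocks_zero₁₂.1 h2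
    exact ⟨⟨⟨P, s1, u1, t1⟩, ⟨Q, s4, u2, t4⟩⟩, rfl⟩
end

section
/- Let q be a prime power and K a finite field with q² elements, with σ : K → K the Frobenius map σ(x) = x^q. Call an m×m matrix B over K Hermitian if σ(B_{ji}) = B_{ij} for all i, j. Then the number of invertible Hermitian m×m matrices over K equals q^{m(m−1)/2} · ∏_{γ=1}^{m} (q^γ + (−1)^γ). -/
open Matrix

/-- Invertible Hermitian matrices. -/
abbrev HU (K : Type*) [Field K] [StarRing K] (n : Type*) [Fintype n] [DecidableEq n] : Type _ :=
  {B : Matrix n n K // B.IsHermitian ∧ IsUnit B}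

/-- Completions of a bordered matrix. -/
abbrev HB (K : Type*) [Field K] [StarRing K] (n : Type*) [Fintype n] [DecidableEq n]
    (a : K) (C : Matrix n Unit K) : Type _ :=
  {D : Matrix n n K // D.IsHermitian ∧
    IsUnit (fromBlocks (a • (1 : Matrix Unit Unit K)) Cᴴ C D)}

section
variable {K : Type*} [Field K] [StarRing K]
variable {n k : Type*} [Fintype n] [DecidableEq n] [Fintype k] [DecidableEq k]

lemma card_HU_congr (e : n ≃ k) : Nat.card (HU K n) = Nat.card (HU K k) := by
  refine Nat.card_congr ((Matrix.reindex e e).subtypeEquiv fun B => ?_)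
  simp [isUnit_submatrix_equiv]

/-- Splitting off the first row and column. -/
def splitEquiv : HU K (Unit ⊕ n) ≃ Σ x : {a : K // star a = a} × Matrix n Unit K,
    HB K n x.1.1 x.2 where
  toFun B := ⟨(⟨B.1 (.inl ()) (.inl ()), B.2.1.apply _ _⟩, B.1.toBlocks₂₁), B.1.toBlocks₂₂, by
    obtain ⟨B, h, hu⟩ := B
    rw [← fromBlocks_toBlocks B] at h hu
    obtain ⟨h1, h2, h3, h4⟩ := isHermitian_fromBlocks_iff.1 h
    refine ⟨h4, ?_⟩
    dsimp only
    rw [h3]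
    convert hu using 2
    ext i j; simp [toBlocks₁₁]⟩
  invFun x := ⟨fromBlocks (x.1.1.1 • (1 : Matrix Unit Unit K)) x.1.2ᴴ x.1.2 x.2.1, by
    refine ⟨isHermitian_fromBlocks_iff.2 ⟨?_, by simp, rfl, x.2.2.1⟩, x.2.2.2⟩
    ext i j
    simp [x.1.1.2]⟩
  left_inv B := by
    obtain ⟨B, h, hu⟩ := B
    apply Subtype.ext
    ext (i | i) (j | j)
    · simp
    · simpa [toBlocks₂₁] using h.apply _ _
    · simp [toBlocks₂₁]
    · simp [toBlocks₂₂]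
  right_inv x := by
    obtain ⟨⟨⟨a, ha⟩, C⟩, D, hD⟩ := x
    simp
    rw [Subtype.heq_iff_coe_eq]
    intro X
    simp

lemma card_HB_of_ne {a : K} (ha : a ≠ 0) (hs : star a = a) (C : Matrix n Unit K) :
    Nat.card (HB K n a C) = Nat.card (HU K n) := by
  letI : Invertible (a • (1 : Matrix Unit Unit K)) :=
    ⟨a⁻¹ • 1, by simp [smul_smul, ha], by simp [smul_smul, ha]⟩
  have hinv : ⅟(a • (1 : Matrix Unit Unit K)) = a⁻¹ • 1 := rfl
  have hH : (C * ⅟(a • (1 : Matrix Unit Unit K)) * Cᴴ).IsHermitian := by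
    apply isHermitian_mul_mul_conjTranspose
    rw [hinv]
    ext i j
    simp [hs]
  refine Nat.card_congr ((Equiv.subRight (C * ⅟(a • (1 : Matrix Unit Unit K)) * Cᴴ)).subtypeEquiv
    fun D => ?_)
  rw [isUnit_fromBlocks_iff_of_invertible₁₁]
  refine and_congr_left fun _ => ⟨fun h => h.sub hH, fun h => ?_⟩
  simpa using h.add hH

lemma card_HB_zero_zero : Nat.card (HB K n 0 0) = 0 := by
  rw [Nat.card_eq_zero]
  left
  refine ⟨fun D => ?_⟩
  have h := (Matrix.isUnit_iff_isUnit_det _).1 D.2.2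
  rw [Matrix.det_eq_zero_of_row_eq_zero (Sum.inl ())] at h
  · simp at h
  · rintro (j | j) <;> simp

lemma card_HB_mul (g : Matrix n n K) (hg : IsUnit g) (C : Matrix n Unit K) :
    Nat.card (HB K n 0 C) = Nat.card (HB K n 0 (g * C)) := by
  obtain ⟨u, rfl⟩ := hg
  have e1 : (u : Matrix n n K) * (↑u⁻¹ : Matrix n n K) = 1 := u.mul_inv
  have e2 : (↑u⁻¹ : Matrix n n K) * (u : Matrix n n K) = 1 := u.inv_mul
  have e3 : (u : Matrix n n K)ᴴ * (↑u⁻¹ : Matrix n n K)ᴴ = 1 := by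
    rw [← conjTranspose_mul, e2, conjTranspose_one]
  have e4 : (↑u⁻¹ : Matrix n n K)ᴴ * (u : Matrix n n K)ᴴ = 1 := by
    rw [← conjTranspose_mul, e1, conjTranspose_one]
  let φ : Matrix n n K ≃ Matrix n n K :=
    { toFun := fun D => (u : Matrix n n K) * D * (u : Matrix n n K)ᴴ
      invFun := fun D => (↑u⁻¹ : Matrix n n K) * D * (↑u⁻¹ : Matrix n n K)ᴴ
      left_inv := fun D => by
        simp only [Matrix.mul_assoc, e3, Matrix.mul_one]
        rw [← Matrix.mul_assoc, e2, Matrix.one_mul]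
      right_inv := fun D => by
        simp only [Matrix.mul_assoc, e4, Matrix.mul_one]
        rw [← Matrix.mul_assoc, e1, Matrix.one_mul] }
  refine Nat.card_congr (φ.subtypeEquiv fun D => ?_)
  refine and_congr ⟨fun h => isHermitian_mul_mul_conjTranspose _ h, fun h => ?_⟩ ?_
  · have := isHermitian_mul_mul_conjTranspose (↑u⁻¹ : Matrix n n K) h
    rwa [show (↑u⁻¹ : Matrix n n K) * φ D * (↑u⁻¹ : Matrix n n K)ᴴ = D from φ.left_inv D] at this
  · have hL : IsUnit (fromBlocks (1 : Matrix Unit Unit K) 0 0 (u : Matrix n n K)) :=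
      isUnit_fromBlocks_zero₂₁.2 ⟨isUnit_one, u.isUnit⟩
    have hR : IsUnit (fromBlocks (1 : Matrix Unit Unit K) 0 0 (u : Matrix n n K)ᴴ) :=
      isUnit_fromBlocks_zero₂₁.2 ⟨isUnit_one, IsUnit.of_mul_eq_one _ e3⟩
    have : fromBlocks ((0 : K) • (1 : Matrix Unit Unit K)) ((u : Matrix n n K) * C)ᴴ
        ((u : Matrix n n K) * C) (φ D) =
        fromBlocks (1 : Matrix Unit Unit K) 0 0 (u : Matrix n n K) *
        fromBlocks ((0 : K) • (1 : Matrix Unit Unit K)) Cᴴ C D *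
        fromBlocks (1 : Matrix Unit Unit K) 0 0 (u : Matrix n n K)ᴴ := by
      simp [fromBlocks_multiply, φ]
    rw [this, hR.mul_right_iff, hL.mul_left_iff]

lemma exists_unit_mul (j : n) (C : Matrix n Unit K) (hC : C ≠ 0) :
    ∃ g : Matrix n n K, IsUnit g ∧ g * (Matrix.of fun i _ => if i = j then 1 else 0 : Matrix n Unit K) = C := by
  have : ∃ i, C i () ≠ 0 := by
    by_contra! h
    exact hC (by ext i j; exact h i)
  obtain ⟨i, hi⟩ := this
  refine ⟨((1 : Matrix n n K).updateCol i (fun x => C x ())).submatrix (Equiv.refl n)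
    (Equiv.swap i j), ?_, ?_⟩
  · rw [isUnit_submatrix_equiv, Matrix.isUnit_iff_isUnit_det, ← Matrix.cramer_apply]
    simpa using hi
  · ext x y
    simp [Matrix.mul_apply]

/-- The base vector. -/
def eCol (K : Type*) [Field K] (k : Type*) [DecidableEq k] : Matrix (Unit ⊕ k) Unit K :=
  Matrix.of fun i _ => if i = Sum.inl () then 1 else 0

lemma isUnit_double (d : K) (w : Matrix k Unit K) (E : Matrix k k K) :
    IsUnit (fromBlocks ((0 : K) • (1 : Matrix Unit Unit K)) (eCol K k)ᴴ (eCol K k)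
      (fromBlocks (d • (1 : Matrix Unit Unit K)) wᴴ w E)) ↔ IsUnit E := by
  let P : Matrix (Unit ⊕ Unit) (Unit ⊕ Unit) K := fromBlocks 0 1 1 (d • 1)
  let P' : Matrix (Unit ⊕ Unit) (Unit ⊕ Unit) K := fromBlocks (-d • 1) 1 1 0
  letI : Invertible P :=
    ⟨P', by simp [P, P', fromBlocks_multiply], by simp [P, P', fromBlocks_multiply]⟩
  have hinv : ⅟P = P' := rfl
  have : fromBlocks ((0 : K) • (1 : Matrix Unit Unit K)) (eCol K k)ᴴ (eCol K k)
      (fromBlocks (d • (1 : Matrix Unit Unit K)) wᴴ w E) =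
      (fromBlocks P (fromRows 0 wᴴ) (fromCols 0 w) E).submatrix
        (Equiv.sumAssoc Unit Unit k).symm (Equiv.sumAssoc Unit Unit k).symm := by
    ext (i | i | i) (j | j | j) <;> simp [P, eCol]
  rw [this, isUnit_submatrix_equiv, isUnit_fromBlocks_iff_of_invertible₁₁, hinv]
  simp [P', fromCols_mul_fromBlocks, fromCols_mul_fromRows]

lemma card_HB_eCol : Nat.card (HB K (Unit ⊕ k) 0 (eCol K k)) =
    Nat.card {a : K // star a = a} * Nat.card (Matrix k Unit K) * Nat.card (HU K k) := by
  rw [← Nat.card_prod, ← Nat.card_prod]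
  refine Nat.card_congr
    { toFun := fun B => ((⟨B.1 (.inl ()) (.inl ()), B.2.1.apply _ _⟩, B.1.toBlocks₂₁),
        ⟨B.1.toBlocks₂₂, ?_⟩)
      invFun := fun x => ⟨fromBlocks (x.1.1.1 • (1 : Matrix Unit Unit K)) x.1.2ᴴ x.1.2 x.2.1, ?_⟩
      left_inv := fun B => ?_
      right_inv := fun x => ?_ }
  · obtain ⟨B, h, hu⟩ := B
    have h' := h
    rw [← fromBlocks_toBlocks B] at h'
    obtain ⟨h1, h2, h3, h4⟩ := isHermitian_fromBlocks_iff.1 h'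
    refine ⟨h4, ?_⟩
    rw [← isUnit_double (B (.inl ()) (.inl ())) B.toBlocks₂₁, h3]
    convert hu using 2
    conv_rhs => rw [← fromBlocks_toBlocks B]
    congr 1
    ext i j; simp [toBlocks₁₁]
  · refine ⟨isHermitian_fromBlocks_iff.2 ⟨?_, by simp, rfl, x.2.2.1⟩,
      (isUnit_double _ _ _).2 x.2.2.2⟩
    ext i j
    simp [x.1.1.2]
  · obtain ⟨B, h, hu⟩ := B
    apply Subtype.ext
    ext (i | i) (j | j)
    · simp
    · simpa [toBlocks₂₁] using h.apply _ _
    · simp [toBlocks₂₁]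
    · simp [toBlocks₂₂]
  · obtain ⟨⟨⟨a, ha⟩, C⟩, D, hD⟩ := x
    simp

lemma card_HB_of_col_ne (C : Matrix (Unit ⊕ k) Unit K) (hC : C ≠ 0) :
    Nat.card (HB K (Unit ⊕ k) 0 C) =
    Nat.card {a : K // star a = a} * Nat.card (Matrix k Unit K) * Nat.card (HU K k) := by
  obtain ⟨g, hg, h⟩ := exists_unit_mul (Sum.inl ()) C hC
  rw [← card_HB_eCol, card_HB_mul g hg (eCol K k), ← h]
  rfl

lemma card_col_s6 [Finite K] : Nat.card (Matrix k Unit K) = Nat.card K ^ Nat.card k := by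
  change Nat.card (k → Unit → K) = _
  rw [Nat.card_fun, Nat.card_fun]
  simp

open Classical in
lemma card_split [Finite K] [Fintype {a : K // star a = a}] :
    Nat.card (HU K (Unit ⊕ n)) = ∑ a : {a : K // star a = a},
      if a.1 = 0 then Nat.card (Σ C : Matrix n Unit K, HB K n 0 C) else
        Nat.card (Matrix n Unit K) * Nat.card (HU K n) := by
  have := Fintype.ofFinite K
  rw [Nat.card_congr splitEquiv, Nat.card_sigma, Fintype.sum_prod_type]
  refine Finset.sum_congr rfl fun a _ => ?_
  split_ifs with h
  · rw [Nat.card_sigma]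
    simp [h]
  · simp only [card_HB_of_ne h a.2]
    simp

lemma card_rec [Finite K] {q : ℕ} (hK : Nat.card K = q ^ 2)
    (hf : Nat.card {a : K // star a = a} = q) :
    Nat.card (HU K (Unit ⊕ (Unit ⊕ k))) =
      (q - 1) * (q ^ (2 * (Nat.card k + 1)) * Nat.card (HU K (Unit ⊕ k))) +
      (q ^ (2 * (Nat.card k + 1)) - 1) * (q ^ (2 * Nat.card k + 1) * Nat.card (HU K k)) := by
  classical
  have := Fintype.ofFinite K
  rw [card_split]
  have h0 : ∀ a : {a : K // star a = a}, a.1 = 0 ↔ a = ⟨0, by simp⟩ := fun a => by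
    rw [Subtype.ext_iff]
  simp only [h0]
  rw [Finset.sum_ite, Finset.sum_const, Finset.sum_const]
  rw [Nat.card_sigma]
  have h1 : ∀ C : Matrix (Unit ⊕ k) Unit K, Nat.card (HB K (Unit ⊕ k) 0 C) =
      if C = 0 then 0 else q ^ (2 * Nat.card k + 1) * Nat.card (HU K k) := by
    intro C
    split_ifs with h
    · rw [h, card_HB_zero_zero]
    · rw [card_HB_of_col_ne C h, hf, card_col_s6, hK]
      ring
  simp only [h1]
  rw [Finset.sum_ite, Finset.sum_const, Finset.sum_const]
  have h2 : (Finset.univ.filter fun C : Matrix (Unit ⊕ k) Unit K => ¬ C = 0).card =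
      q ^ (2 * (Nat.card k + 1)) - 1 := by
    rw [Finset.filter_not, Finset.filter_eq', if_pos (Finset.mem_univ _), Finset.card_sdiff]
    simp only [Finset.inter_univ, Finset.card_singleton, Finset.card_univ]
    rw [← Nat.card_eq_fintype_card, card_col_s6, hK, Nat.card_sum, ← pow_mul]
    simp [add_comm]
  have h3 : (Finset.univ.filter fun a : {a : K // star a = a} => ¬ a = ⟨0, by simp⟩).card =
      q - 1 := by
    rw [Finset.filter_not, Finset.filter_eq', if_pos (Finset.mem_univ _), Finset.card_sdiff]
    simp only [Finset.inter_univ, Finset.card_singleton, Finset.card_univ]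
    rw [← Nat.card_eq_fintype_card, hf]
  rw [h2, h3, card_col_s6, hK, Finset.filter_eq', if_pos (Finset.mem_univ _), Nat.card_sum]
  simp only [Nat.card_unique, smul_eq_mul, Finset.card_singleton, mul_zero, zero_add, one_mul,
    ← pow_mul, add_comm]

lemma card_HU_empty [IsEmpty k] : Nat.card (HU K k) = 1 := by
  rw [Nat.card_eq_one_iff_unique]
  refine ⟨⟨fun a b => Subtype.ext (Subsingleton.elim _ _)⟩, ⟨1, isHermitian_one, isUnit_one⟩⟩

lemma card_HU_one [Finite K] [IsEmpty k] {q : ℕ} (hf : Nat.card {a : K // star a = a} = q) :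
    Nat.card (HU K (Unit ⊕ k)) = q - 1 := by
  classical
  have := Fintype.ofFinite K
  rw [card_split]
  have h0 : ∀ a : {a : K // star a = a}, a.1 = 0 ↔ a = ⟨0, by simp⟩ := fun a => by
    rw [Subtype.ext_iff]
  simp only [h0]
  rw [Finset.sum_ite, Finset.sum_const, Finset.sum_const]
  have h3 : (Finset.univ.filter fun a : {a : K // star a = a} => ¬ a = ⟨0, by simp⟩).card =
      q - 1 := by
    rw [Finset.filter_not, Finset.filter_eq', if_pos (Finset.mem_univ _), Finset.card_sdiff]
    simp only [Finset.inter_univ, Finset.card_singleton, Finset.card_univ]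
    rw [← Nat.card_eq_fintype_card, hf]
  rw [h3, card_HU_empty, card_col_s6, Nat.card_sigma]
  have h1 : ∀ C : Matrix k Unit K, Nat.card (HB K k 0 C) = 0 := by
    intro C
    rw [Subsingleton.elim C 0, card_HB_zero_zero]
  simp only [h1]
  simp

/-- Adding one index. -/
def finE (m : ℕ) : Fin (m + 1) ≃ Unit ⊕ Fin m :=
  (finSuccEquiv m).trans ((Equiv.optionEquivSumPUnit _).trans (Equiv.sumComm _ _))

lemma card_formula [Finite K] {q : ℕ} (hq : 1 ≤ q) (hK : Nat.card K = q ^ 2)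
    (hf : Nat.card {a : K // star a = a} = q) (m : ℕ) :
    (Nat.card (HU K (Fin m)) : ℤ) = (q : ℤ) ^ (m * (m - 1) / 2) *
        ∏ γ ∈ Finset.range m, ((q : ℤ) ^ (γ + 1) + (-1) ^ (γ + 1)) := by
  have htri : ∀ m : ℕ, (m + 1) * m / 2 = m * (m - 1) / 2 + m := by
    intro m
    have := Finset.sum_range_id (m + 1)
    rw [Finset.sum_range_succ, Finset.sum_range_id] at this
    exact this.symm
  induction m using Nat.twoStepInduction with
  | zero => simp [card_HU_empty]
  | one =>
    rw [card_HU_congr (finE 0), card_HU_one hf]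
    push_cast [Nat.cast_sub hq]
    simp
    ring
  | more m ih1 ih2 =>
    rw [card_HU_congr ((finE (m + 1)).trans (Equiv.sumCongr (Equiv.refl _) (finE m))),
      card_rec hK hf, ← card_HU_congr (finE m)]
    have hq2 : 1 ≤ q ^ (2 * (Nat.card (Fin m) + 1)) := Nat.one_le_pow _ _ hq
    push_cast [Nat.cast_sub hq, Nat.cast_sub hq2]
    have ht1 := htri (m + 1)
    simp only [Nat.add_sub_cancel, add_assoc, Nat.reduceAdd] at ht1 ih2
    rw [ih1, ih2, ht1, htri m]
    simp only [Finset.prod_range_succ, Nat.card_eq_fintype_card, Fintype.card_fin]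
    have hε : ((-1 : ℤ) ^ m) ^ 2 = 1 := by rw [← pow_mul, mul_comm, pow_mul]; simp
    generalize (∏ γ ∈ Finset.range m, ((q : ℤ) ^ (γ + 1) + (-1) ^ (γ + 1))) = F
    generalize m * (m - 1) / 2 = t
    have e1 : (q : ℤ) ^ (2 * (m + 1)) = (q ^ m) ^ 2 * q ^ 2 := by ring
    have e2 : (q : ℤ) ^ (2 * m + 1) = (q ^ m) ^ 2 * q := by ring
    simp only [e1, e2, pow_add, pow_one]
    generalize (-1 : ℤ) ^ m = ε at *
    generalize (q : ℤ) ^ m = x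
    generalize (q : ℤ) ^ t = y
    linear_combination (y * x ^ 2 * F * q) * hε
end

/-- Star ring structure from the Frobenius. -/
abbrev frobStar (K : Type*) [Field K] [Fintype K] (p k : ℕ) [Fact p.Prime] [CharP K p]
    (hK : Fintype.card K = (p ^ k) ^ 2) : StarRing K where
  star x := x ^ (p ^ k)
  star_involutive x := by
    change (x ^ p ^ k) ^ p ^ k = x
    rw [← pow_mul, ← sq, ← hK, FiniteField.pow_card]
  star_mul x y := by
    change (x * y) ^ p ^ k = y ^ p ^ k * x ^ p ^ k
    rw [mul_pow, mul_comm]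
  star_add x y := add_pow_char_pow x y p k

lemma card_fixed (K : Type*) [Field K] [Fintype K] {q : ℕ} (hq : 1 < q)
    (hK : Fintype.card K = q ^ 2) : Nat.card {a : K // a ^ q = a} = q := by
  classical
  have h1 := IsCyclic.card_powMonoidHom_ker (G := Kˣ) (q - 1)
  have h2 : Nat.card Kˣ = (q - 1) * (q + 1) := by
    rw [Nat.card_eq_fintype_card, Fintype.card_units, hK, mul_comm]
    simpa using Nat.sq_sub_sq q 1
  rw [h2, Nat.gcd_eq_right (Dvd.intro _ rfl)] at h1
  have hpow : ∀ a : K, a ^ q = a ^ (q - 1) * a := fun a => by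
    rw [← pow_succ, Nat.sub_add_cancel hq.le]
  have e : {a : K // a ^ q = a} ≃ Option (powMonoidHom (q - 1) : Kˣ →* Kˣ).ker :=
    { toFun := fun a => if h : a.1 = 0 then none else some ⟨Units.mk0 a.1 h, by
        rw [MonoidHom.mem_ker]
        ext
        have := a.2
        rw [hpow] at this
        simpa [h] using this⟩
      invFun := fun x => x.elim ⟨0, by simp; omega⟩ fun u => ⟨u.1, by
        have := congrArg Units.val (MonoidHom.mem_ker.1 u.2)
        rw [hpow]
        simp at this
        simp [this]⟩
      left_inv := fun a => by
        by_cases h : a.1 = 0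
        · simp [h]; exact Subtype.ext h.symm
        · simp [h]
      right_inv := fun x => by
        cases x <;> simp }
  rw [Nat.card_congr e, Finite.card_option, h1]
  omega

/-- The number of invertible Hermitian `m × m` matrices over the field with `q²` elements
(with conjugation the Frobenius `x ↦ x^q`) equals
`q^(m(m-1)/2) · ∏_{γ=1}^{m} (q^γ + (-1)^γ)`. -/
theorem stmt6 (q m : ℕ) (hq : ∃ p k, Nat.Prime p ∧ 0 < k ∧ q = p ^ k)
    (K : Type*) [Field K] [Fintype K] (hK : Fintype.card K = q ^ 2) (hm : 1 ≤ m) :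
    (Nat.card {B : Matrix (Fin m) (Fin m) K //
        IsUnit B ∧ ∀ i j, (B j i) ^ q = B i j} : ℤ) =
      (q : ℤ) ^ (m * (m - 1) / 2) *
        ∏ γ ∈ Finset.range m, ((q : ℤ) ^ (γ + 1) + (-1) ^ (γ + 1)) := by
  obtain ⟨p, k, hp, hk, rfl⟩ := hq
  have : Fact p.Prime := ⟨hp⟩
  have : CharP K p := by
    obtain ⟨p', hp'⟩ := CharP.exists K
    obtain ⟨l, hl, hc⟩ := FiniteField.card K p'
    have hd : p ∣ p' ^ (l : ℕ) := by
      rw [← hc, hK, ← pow_mul]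
      exact dvd_pow_self _ (by omega)
    have := (Nat.prime_dvd_prime_iff_eq hp hl).1 (hp.dvd_of_dvd_pow hd)
    rwa [this]
  have h1 : 1 < p ^ k := Nat.one_lt_pow hk.ne' hp.one_lt
  let _ := frobStar K p k hK
  rw [← card_formula (K := K) h1.le (by rw [Nat.card_eq_fintype_card, hK]) (card_fixed K h1 hK) m]
  congr 1
  refine Nat.card_congr (Equiv.subtypeEquivRight fun B => ?_)
  rw [and_comm, IsHermitian.ext_iff]
  rfl
end

section
/- Let q be an odd prime power, n an odd positive integer, and K a finite field with q^n elements. Then the set { x ∈ Kˣ : x^{q^i + 1} = 1 for some integer i ≥ 0 } equals {1, −1}; in particular it has exactly 2 elements. -/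
/-- In a finite field of order `q^n` with `q` an odd prime power and `n` odd, the set of
units `x` with `x^(qⁱ+1) = 1` for some `i ≥ 0` is exactly `{1, -1}`, of cardinality `2`. -/
theorem stmt7 (q n : ℕ) (hq : ∃ p k, Nat.Prime p ∧ 0 < k ∧ q = p ^ k) (hqodd : Odd q)
    (hn : Odd n) (hnpos : 0 < n)
    (K : Type*) [Field K] [Fintype K] (hK : Fintype.card K = q ^ n) :
    {x : Kˣ | ∃ i : ℕ, x ^ (q ^ i + 1) = 1} = {1, -1} ∧
      Nat.card {x : Kˣ // ∃ i : ℕ, x ^ (q ^ i + 1) = 1} = 2 := by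
  have key : ∀ x : Kˣ, (∃ i : ℕ, x ^ (q ^ i + 1) = 1) ↔ x = 1 ∨ x = -1 := by
    intro x
    constructor
    · rintro ⟨i, hi⟩
      have h1 : x ^ (q ^ i) = x⁻¹ := by
        rw [pow_succ] at hi
        exact eq_inv_of_mul_eq_one_left hi
      have h2 : ∀ m : ℕ, x ^ ((q ^ i) ^ (2 * m + 1)) = x⁻¹ := by
        intro m
        induction m with
        | zero => simpa using h1
        | succ m ih =>
          have e : (q ^ i) ^ (2 * (m + 1) + 1) = (q ^ i) ^ (2 * m + 1) * q ^ i * q ^ i := by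
            ring
          rw [e, pow_mul, pow_mul, ih, inv_pow, h1, inv_inv, h1]
      obtain ⟨m, hm⟩ := hn
      have h3 : x ^ ((q ^ i) ^ n) = x := by
        have e : (q ^ i) ^ n = Fintype.card K ^ i := by
          rw [hK, ← pow_mul, ← pow_mul, mul_comm]
        rw [e]
        ext
        rw [Units.val_pow_eq_pow_val, FiniteField.pow_card_pow]
      have h4 : x = x⁻¹ := by
        rw [← h2 m, ← hm, h3]
      have h5 : (x : K) * x = 1 := by
        have : x * x = 1 := by
          nth_rewrite 2 [h4]
          exact mul_inv_cancel x
        simpa only [Units.val_mul, Units.val_one] using congrArg Units.val this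
      rcases mul_self_eq_one_iff.mp h5 with h | h
      · left; ext; simpa using h
      · right; ext; simpa using h
    · rintro (h | h)
      · exact ⟨0, by simp [h]⟩
      · exact ⟨0, by simp [h]⟩
  have hset : {x : Kˣ | ∃ i : ℕ, x ^ (q ^ i + 1) = 1} = {1, -1} := by
    ext x
    simpa using key x
  have hne : (1 : Kˣ) ≠ -1 := by
    intro h
    have h' : (-1 : K) = 1 := by
      have := congrArg Units.val h
      simpa using this.symm
    have hodd : Odd (Fintype.card K) := by rw [hK]; exact hqodd.pow
    have hc : ringChar K ≠ 2 := by
      intro hc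
      have := FiniteField.even_card_of_char_two hc
      rw [Nat.odd_iff] at hodd
      omega
    exact Ring.neg_one_ne_one_of_char_ne_two hc h'
  refine ⟨hset, ?_⟩
  change Nat.card ({x : Kˣ | ∃ i : ℕ, x ^ (q ^ i + 1) = 1} : Set Kˣ) = 2
  rw [hset, Nat.card_coe_set_eq, Set.ncard_pair hne]
end

section
/- For every partition π, writing r_m for the multiplicity of m in π, one has C_π = ∏_{m ≥ 1} C_{(m^{r_m})} and D_π = ∏_{m ≥ 1} D_{(m^{r_m})}, where (m^{r_m}) denotes the partition with r_m parts all equal to m (the products have only finitely many factors different from 1). -/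
/-- For a partition (multiset of positive integers) `μ`,
`z_μ = ∏_d d^{m_d(μ)} · m_d(μ)!`. -/
def zPart (μ : Multiset ℕ) : ℚ :=
  ∏ d ∈ μ.toFinset, ((d : ℚ) ^ μ.count d * (μ.count d).factorial)

/-- A finite set of multisets containing every multiset that can occur as one of the four
components of a decomposition `ρ₊ ∪ ρ₋ ∪ (2·τs) ∪ (τp ∪ τp) = π`. -/
def decompCarrier (π : Multiset ℕ) : Finset (Multiset ℕ) :=
  π.powerset.toFinset ∪ π.powerset.toFinset.image (Multiset.map (· / 2))

/-- `C_π^+`: the sum over all quadruples of partitions `(ρ₊, ρ₋, τs, τp)` with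
`ρ₊ ∪ ρ₋ ∪ (2·τs) ∪ (τp ∪ τp) = π` and `|ρ₋|` even of
`(-1)^{ℓ(τs)} / (z_{ρ₊} z_{ρ₋} · 2^{ℓ(τs)} z_{τs} · 2^{ℓ(τp)} z_{τp})`. -/
def Cplus (π : Multiset ℕ) : ℚ :=
  ∑ ρp ∈ decompCarrier π, ∑ ρm ∈ decompCarrier π,
    ∑ τs ∈ decompCarrier π, ∑ τp ∈ decompCarrier π,
      if ρp + ρm + Multiset.map (2 * ·) τs + (τp + τp) = π ∧ Even ρm.sum then
        (-1 : ℚ) ^ (Multiset.card τs) /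
          (zPart ρp * zPart ρm * 2 ^ (Multiset.card τs) * zPart τs *
            2 ^ (Multiset.card τp) * zPart τp)
      else 0

/-- `C_π^-`: as `C_π^+` but with `|ρ₋|` odd. -/
def Cminus (π : Multiset ℕ) : ℚ :=
  ∑ ρp ∈ decompCarrier π, ∑ ρm ∈ decompCarrier π,
    ∑ τs ∈ decompCarrier π, ∑ τp ∈ decompCarrier π,
      if ρp + ρm + Multiset.map (2 * ·) τs + (τp + τp) = π ∧ Odd ρm.sum then
        (-1 : ℚ) ^ (Multiset.card τs) /
          (zPart ρp * zPart ρm * 2 ^ (Multiset.card τs) * zPart τs *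
            2 ^ (Multiset.card τp) * zPart τp)
      else 0

/-- `C_π := C_π^+ + C_π^-`. -/
def Cfun (π : Multiset ℕ) : ℚ := Cplus π + Cminus π

/-- `D_π := C_π^+ - C_π^-`. -/
def Dfun (π : Multiset ℕ) : ℚ := Cplus π - Cminus π

abbrev QT := Multiset ℕ × Multiset ℕ × Multiset ℕ × Multiset ℕ

def qsum (q : QT) : Multiset ℕ :=
  q.1 + q.2.1 + Multiset.map (2 * ·) q.2.2.1 + (q.2.2.2 + q.2.2.2)

def qset (π : Multiset ℕ) : Finset QT :=
  (decompCarrier π ×ˢ decompCarrier π ×ˢ decompCarrier π ×ˢ decompCarrier π).filter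
    (fun q => qsum q = π)

def qw (ε : ℚ) (q : QT) : ℚ :=
  ε ^ q.2.1.sum * ((-1 : ℚ) ^ (Multiset.card q.2.2.1) /
          (zPart q.1 * zPart q.2.1 * 2 ^ (Multiset.card q.2.2.1) * zPart q.2.2.1 *
            2 ^ (Multiset.card q.2.2.2) * zPart q.2.2.2))

def qF (ε : ℚ) (π : Multiset ℕ) : ℚ := ∑ q ∈ qset π, qw ε q

lemma mem_carrier_of_le {π μ : Multiset ℕ} (h : μ ≤ π) : μ ∈ decompCarrier π := by
  simp [decompCarrier, h]

lemma mem_carrier_of_map_le {π μ : Multiset ℕ} (h : Multiset.map (2 * ·) μ ≤ π) :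
    μ ∈ decompCarrier π := by
  simp only [decompCarrier, Finset.mem_union, Finset.mem_image, Multiset.mem_toFinset,
    Multiset.mem_powerset]
  right
  exact ⟨_, h, by simp⟩

lemma mem_qset {π : Multiset ℕ} {q : QT} : q ∈ qset π ↔ qsum q = π := by
  simp only [qset, Finset.mem_filter, Finset.mem_product, and_iff_right_iff_imp]
  rintro rfl
  refine ⟨mem_carrier_of_le ?_, mem_carrier_of_le ?_, mem_carrier_of_map_le ?_,
    mem_carrier_of_le ?_⟩ <;> rw [Multiset.le_iff_count] <;> intro x <;>
    simp only [qsum, Multiset.count_add] <;> omega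

lemma Cfun_eq (π : Multiset ℕ) : Cfun π = qF 1 π := by
  rw [qF, qset, Finset.sum_filter]
  simp only [Finset.sum_product]
  simp only [Cfun, Cplus, Cminus, qw, ← Finset.sum_add_distrib, qsum]
  refine Finset.sum_congr rfl fun a _ => Finset.sum_congr rfl fun b _ =>
    Finset.sum_congr rfl fun c _ => Finset.sum_congr rfl fun d _ => ?_
  rcases Nat.even_or_odd b.sum with h | h
  · have h' : ¬ Odd b.sum := Nat.not_odd_iff_even.2 h
    simp [h, h']
  · have h' : ¬ Even b.sum := Nat.not_even_iff_odd.2 h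
    simp [h, h']

lemma Dfun_eq (π : Multiset ℕ) : Dfun π = qF (-1) π := by
  rw [qF, qset, Finset.sum_filter]
  simp only [Finset.sum_product]
  simp only [Dfun, Cplus, Cminus, qw, ← Finset.sum_sub_distrib, qsum]
  refine Finset.sum_congr rfl fun a _ => Finset.sum_congr rfl fun b _ =>
    Finset.sum_congr rfl fun c _ => Finset.sum_congr rfl fun d _ => ?_
  rcases Nat.even_or_odd b.sum with h | h
  · have h' : ¬ Odd b.sum := Nat.not_odd_iff_even.2 h
    simp only [h, h', h.neg_one_pow, and_true, and_false, if_false, sub_zero, one_mul]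
  · have h' : ¬ Even b.sum := Nat.not_even_iff_odd.2 h
    simp only [h, h', h.neg_one_pow, and_true, and_false, if_false, zero_sub]
    split_ifs <;> simp

lemma zPart_add {μ ν : Multiset ℕ} (h : Disjoint μ ν) :
    zPart (μ + ν) = zPart μ * zPart ν := by
  unfold zPart
  rw [Multiset.toFinset_add, Finset.prod_union (Multiset.disjoint_toFinset.2 h)]
  rw [Multiset.disjoint_left] at h
  congr 1 <;> refine Finset.prod_congr rfl fun d hd => ?_
  · rw [Multiset.count_add, Multiset.count_eq_zero_of_notMem (h (Multiset.mem_toFinset.1 hd)),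
      add_zero]
  · rw [Multiset.count_add, Multiset.count_eq_zero_of_notMem
      (fun h' => h h' (Multiset.mem_toFinset.1 hd)), zero_add]

lemma mem_of_qsum {a : Multiset ℕ} {q : QT} (h : qsum q = a) :
    (∀ x ∈ q.1, x ∈ a) ∧ (∀ x ∈ q.2.1, x ∈ a) ∧ (∀ x ∈ q.2.2.1, 2 * x ∈ a) ∧
      (∀ x ∈ q.2.2.2, x ∈ a) := by
  subst h
  refine ⟨fun x hx => ?_, fun x hx => ?_, fun x hx => ?_, fun x hx => ?_⟩ <;>
    simp [qsum, hx]

lemma filter_left {s t : Multiset ℕ} {p : ℕ → Prop} [DecidablePred p]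
    (hs : ∀ x ∈ s, p x) (ht : ∀ x ∈ t, ¬ p x) : (s + t).filter p = s := by
  rw [Multiset.filter_add, Multiset.filter_eq_self.2 hs, Multiset.filter_eq_nil.2 ht, add_zero]

lemma filter_right {s t : Multiset ℕ} {p : ℕ → Prop} [DecidablePred p]
    (hs : ∀ x ∈ s, p x) (ht : ∀ x ∈ t, ¬ p x) : (s + t).filter (fun x => ¬ p x) = t := by
  rw [Multiset.filter_add, Multiset.filter_eq_self.2 ht,
    Multiset.filter_eq_nil.2 (fun x hx h => h (hs x hx)), zero_add]

def qfilt (p : ℕ → Prop) [DecidablePred p] (q : QT) : QT :=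
  (q.1.filter p, q.2.1.filter p, q.2.2.1.filter (fun x => p (2 * x)), q.2.2.2.filter p)

lemma qsum_qfilt (p : ℕ → Prop) [DecidablePred p] (q : QT) :
    qsum (qfilt p q) = (qsum q).filter p := by
  simp only [qsum, qfilt, Multiset.filter_add, Multiset.filter_map]
  rfl

lemma qsum_add (q r : QT) : qsum (q + r) = qsum q + qsum r := by
  simp only [qsum, Prod.fst_add, Prod.snd_add, Multiset.map_add]
  abel

lemma qw_add (ε : ℚ) {a b : Multiset ℕ} (hab : Disjoint a b) {q r : QT}
    (hq : qsum q = a) (hr : qsum r = b) : qw ε (q + r) = qw ε q * qw ε r := by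
  obtain ⟨h1, h2, h3, h4⟩ := mem_of_qsum hq
  obtain ⟨k1, k2, k3, k4⟩ := mem_of_qsum hr
  have hd : ∀ {x}, x ∈ a → x ∉ b := Multiset.disjoint_left.1 hab
  simp only [qw, Prod.fst_add, Prod.snd_add]
  rw [zPart_add (Multiset.disjoint_left.2 fun {x} hx hy => hd (h1 x hx) (k1 x hy)),
    zPart_add (Multiset.disjoint_left.2 fun {x} hx hy => hd (h2 x hx) (k2 x hy)),
    zPart_add (Multiset.disjoint_left.2 fun {x} hx hy => hd (h3 x hx) (k3 x hy)),
    zPart_add (Multiset.disjoint_left.2 fun {x} hx hy => hd (h4 x hx) (k4 x hy))]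
  simp only [Multiset.sum_add, Multiset.card_add, pow_add, div_eq_mul_inv, mul_inv]
  ring

lemma qF_add (ε : ℚ) {a b : Multiset ℕ} (hab : Disjoint a b) :
    qF ε (a + b) = qF ε a * qF ε b := by
  have hd : ∀ {x}, x ∈ a → x ∉ b := Multiset.disjoint_left.1 hab
  have ha : ∀ x ∈ a, x ∈ a := fun _ h => h
  have hb : ∀ x ∈ b, ¬ x ∈ a := fun _ h h' => hd h' h
  unfold qF
  rw [Finset.sum_mul_sum, ← Finset.sum_product']
  symm
  refine Finset.sum_nbij' (fun x => x.1 + x.2)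
    (fun q => (qfilt (fun x => x ∈ a) q, qfilt (fun x => ¬ x ∈ a) q)) ?_ ?_ ?_ ?_ ?_
  · rintro ⟨q, r⟩ h
    simp only [Finset.mem_product, mem_qset] at h ⊢
    rw [qsum_add, h.1, h.2]
  · intro q h
    simp only [Finset.mem_product, mem_qset] at h ⊢
    rw [qsum_qfilt, qsum_qfilt, h]
    exact ⟨filter_left ha hb, filter_right ha hb⟩
  · rintro ⟨q, r⟩ h
    simp only [Finset.mem_product, mem_qset] at h
    obtain ⟨h1, h2, h3, h4⟩ := mem_of_qsum h.1
    obtain ⟨k1, k2, k3, k4⟩ := mem_of_qsum h.2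
    have k1' := fun x hx => hb _ (k1 x hx)
    have k2' := fun x hx => hb _ (k2 x hx)
    have k3' := fun x hx => hb _ (k3 x hx)
    have k4' := fun x hx => hb _ (k4 x hx)
    refine Prod.ext ?_ ?_
    · exact Prod.ext (filter_left h1 k1') (Prod.ext (filter_left h2 k2')
        (Prod.ext (filter_left (p := fun x => 2 * x ∈ a) h3 k3') (filter_left h4 k4')))
    · exact Prod.ext (filter_right h1 k1') (Prod.ext (filter_right h2 k2')
        (Prod.ext (filter_right (p := fun x => 2 * x ∈ a) h3 k3') (filter_right h4 k4')))
  · intro q _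
    exact Prod.ext (Multiset.filter_add_not _ _) (Prod.ext (Multiset.filter_add_not _ _)
      (Prod.ext (Multiset.filter_add_not (fun x => 2 * x ∈ a) _) (Multiset.filter_add_not _ _)))
  · rintro ⟨q, r⟩ h
    simp only [Finset.mem_product, mem_qset] at h
    exact (qw_add ε hab h.1 h.2).symm

lemma qF_zero (ε : ℚ) : qF ε 0 = 1 := by
  have : qset 0 = {((0, 0, 0, 0) : QT)} := by
    ext ⟨a, b, c, d⟩
    rw [mem_qset]
    simp [qsum, and_assoc]
  rw [qF, this]
  simp [qw, zPart]

lemma qF_prod (ε : ℚ) (n : ℕ → ℕ) (s : Finset ℕ) :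
    qF ε (∑ m ∈ s, Multiset.replicate (n m) m) =
      ∏ m ∈ s, qF ε (Multiset.replicate (n m) m) := by
  induction s using Finset.induction_on with
  | empty => simp [qF_zero]
  | insert m s hm ih =>
    rw [Finset.sum_insert hm, Finset.prod_insert hm, qF_add, ih]
    rw [Multiset.disjoint_left]
    intro x hx hy
    rw [Multiset.eq_of_mem_replicate hx] at hy
    obtain ⟨k, hk, hy⟩ := Multiset.mem_sum.1 hy
    exact hm (Multiset.eq_of_mem_replicate hy ▸ hk)

lemma qF_main (ε : ℚ) (π : Multiset ℕ) :
    qF ε π = ∏ m ∈ π.toFinset, qF ε (Multiset.replicate (π.count m) m) := by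
  rw [← qF_prod]
  congr 1
  conv_lhs => rw [← Multiset.toFinset_sum_count_nsmul_eq π]
  simp [Multiset.nsmul_singleton]

/-- `C_π` and `D_π` are multiplicative over the distinct parts of `π`. -/
theorem stmt11 (π : Multiset ℕ) (hπ : ∀ x ∈ π, 0 < x) :
    Cfun π = ∏ m ∈ π.toFinset, Cfun (Multiset.replicate (π.count m) m) ∧
    Dfun π = ∏ m ∈ π.toFinset, Dfun (Multiset.replicate (π.count m) m) := by
  simp only [Cfun_eq, Dfun_eq]
  exact ⟨qF_main 1 π, qF_main (-1) π⟩
end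

section
/- For every partition π, the rational numbers C_π and D_π are non-negative: C_π ≥ 0 and D_π ≥ 0. -/
namespace Stmt12Aux

/-- The factor `∏ m_d(μ)!`. -/
def facProd (μ : Multiset ℕ) : ℚ := ∏ d ∈ μ.toFinset, ((μ.count d).factorial : ℚ)

/-- The exponential weight `∏ w(d)^{m_d} / m_d!`. -/
def E (w : ℕ → ℚ) (μ : Multiset ℕ) : ℚ := (μ.map w).prod / facProd μ

lemma facProd_eq (μ : Multiset ℕ) (S : Finset ℕ) (h : μ.toFinset ⊆ S) :
    facProd μ = ∏ d ∈ S, ((μ.count d).factorial : ℚ) := by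
  unfold facProd
  apply Finset.prod_subset h
  intro x _ hx
  rw [Multiset.mem_toFinset] at hx
  simp [Multiset.count_eq_zero_of_notMem hx]

lemma facProd_cons (d : ℕ) (s : Multiset ℕ) :
    facProd (d ::ₘ s) = (s.count d + 1) * facProd s := by
  rw [facProd_eq s (d ::ₘ s).toFinset
    (Multiset.toFinset_subset.2 (Multiset.subset_cons s d)), facProd]
  have hd : d ∈ (d ::ₘ s).toFinset := by simp
  rw [← Finset.mul_prod_erase _ _ hd, ← Finset.mul_prod_erase _ _ hd]
  rw [Multiset.count_cons_self, Nat.factorial_succ]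
  have : ∏ x ∈ (d ::ₘ s).toFinset.erase d, (((d ::ₘ s).count x).factorial : ℚ)
      = ∏ x ∈ (d ::ₘ s).toFinset.erase d, ((s.count x).factorial : ℚ) := by
    apply Finset.prod_congr rfl
    intro x hx
    rw [Multiset.count_cons_of_ne (Finset.ne_of_mem_erase hx)]
  rw [this]; push_cast; ring

lemma facProd_pos (s : Multiset ℕ) : 0 < facProd s := by
  unfold facProd
  exact Finset.prod_pos fun i _ => by exact_mod_cast Nat.factorial_pos _

lemma E_cons (w : ℕ → ℚ) (d : ℕ) (s : Multiset ℕ) :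
    ((d ::ₘ s).count d : ℚ) * E w (d ::ₘ s) = w d * E w s := by
  unfold E
  rw [facProd_cons, Multiset.map_cons, Multiset.prod_cons, Multiset.count_cons_self]
  have := (facProd_pos s).ne'
  have h2 : (s.count d + 1 : ℚ) ≠ 0 := by positivity
  push_cast
  field_simp

lemma E_nonneg (w : ℕ → ℚ) (hw : ∀ d, 0 ≤ w d) (s : Multiset ℕ) : 0 ≤ E w s := by
  unfold E
  apply div_nonneg _ (facProd_pos s).le
  apply Multiset.prod_nonneg
  intro a ha
  obtain ⟨x, _, rfl⟩ := Multiset.mem_map.1 ha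
  exact hw x

lemma conv (v w : ℕ → ℚ) (s : Multiset ℕ) :
    ∑ a ∈ s.powerset.toFinset, E v a * E w (s - a) = E (fun d => v d + w d) s := by
  induction s using Multiset.induction_on with
  | empty => simp [E, facProd]
  | cons d s ih =>
    have hc : ((d ::ₘ s).count d : ℚ) ≠ 0 := by
      rw [Multiset.count_cons_self]; positivity
    apply mul_left_cancel₀ hc
    rw [E_cons, ← ih, add_mul, Finset.mul_sum, Finset.mul_sum, Finset.mul_sum]
    have h1 : ∑ a ∈ s.powerset.toFinset, v d * (E v a * E w (s - a)) =
        ∑ a ∈ (d ::ₘ s).powerset.toFinset, (a.count d : ℚ) * (E v a * E w (d ::ₘ s - a)) := by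
      have hsub : (s.powerset.toFinset).image (Multiset.cons d) ⊆
          (d ::ₘ s).powerset.toFinset := by
        intro a ha
        simp only [Finset.mem_image, Multiset.mem_toFinset, Multiset.mem_powerset] at ha ⊢
        obtain ⟨b, hb, rfl⟩ := ha
        exact Multiset.cons_le_cons d hb
      rw [← Finset.sum_subset hsub]
      · rw [Finset.sum_image (by intro a _ b _ h; exact (Multiset.cons_inj_right d).1 h)]
        apply Finset.sum_congr rfl
        intro a _
        rw [← mul_assoc, ← mul_assoc, E_cons]
        congr 2
        ext x
        simp [Multiset.count_sub]
      · intro a ha hna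
        have : d ∉ a := by
          intro hda
          apply hna
          obtain ⟨b, rfl⟩ := Multiset.exists_cons_of_mem hda
          simp only [Finset.mem_image, Multiset.mem_toFinset, Multiset.mem_powerset] at ha ⊢
          exact ⟨b, (Multiset.cons_le_cons_iff d).1 ha, rfl⟩
        simp [Multiset.count_eq_zero_of_notMem this]
    have h2 : ∑ a ∈ s.powerset.toFinset, w d * (E v a * E w (s - a)) =
        ∑ a ∈ (d ::ₘ s).powerset.toFinset,
          ((d ::ₘ s - a).count d : ℚ) * (E v a * E w (d ::ₘ s - a)) := by
      have hsub : s.powerset.toFinset ⊆ (d ::ₘ s).powerset.toFinset := by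
        intro a ha
        simp only [Multiset.mem_toFinset, Multiset.mem_powerset] at ha ⊢
        exact ha.trans (Multiset.le_cons_self s d)
      rw [← Finset.sum_subset hsub]
      · apply Finset.sum_congr rfl
        intro a ha
        simp only [Multiset.mem_toFinset, Multiset.mem_powerset] at ha
        have : d ::ₘ s - a = d ::ₘ (s - a) := by
          obtain ⟨b, rfl⟩ := Multiset.le_iff_exists_add.1 ha
          rw [← Multiset.add_cons, add_tsub_cancel_left, add_tsub_cancel_left]
        rw [this]
        linear_combination (- E v a) * E_cons w d (s - a)
      · intro a ha hna
        simp only [Multiset.mem_toFinset, Multiset.mem_powerset] at ha hna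
        obtain ⟨b, hb⟩ := Multiset.le_iff_exists_add.1 ha
        have : d ∉ d ::ₘ s - a := by
          intro hd
          apply hna
          rw [hb, add_tsub_cancel_left] at hd
          obtain ⟨c, rfl⟩ := Multiset.exists_cons_of_mem hd
          rw [Multiset.add_cons, Multiset.cons_inj_right] at hb
          rw [hb]; exact Multiset.le_add_right a c
        simp [Multiset.count_eq_zero_of_notMem this]
    rw [h1, h2, ← Finset.sum_add_distrib]
    apply Finset.sum_congr rfl
    intro a ha
    simp only [Multiset.mem_toFinset, Multiset.mem_powerset] at ha
    have : (d ::ₘ s).count d = a.count d + (d ::ₘ s - a).count d := by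
      rw [← Multiset.count_add, add_tsub_cancel_of_le ha]
    rw [this]; push_cast; ring

/-- Convolution as a double sum over a large enough finset. -/
lemma conv2 (v w : ℕ → ℚ) (s : Multiset ℕ) (K : Finset (Multiset ℕ))
    (hK : ∀ t ≤ s, t ∈ K) :
    ∑ a ∈ K, ∑ b ∈ K, (if a + b = s then E v a * E w b else 0) =
      E (fun d => v d + w d) s := by
  rw [← conv]
  have hsub : s.powerset.toFinset ⊆ K := by
    intro a ha
    simp only [Multiset.mem_toFinset, Multiset.mem_powerset] at ha
    exact hK a ha
  rw [← Finset.sum_subset hsub]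
  · apply Finset.sum_congr rfl
    intro a ha
    simp only [Multiset.mem_toFinset, Multiset.mem_powerset] at ha
    rw [Finset.sum_eq_single (s - a)]
    · rw [if_pos (add_tsub_cancel_of_le ha)]
    · intro b _ hb
      rw [if_neg]
      rintro rfl
      simp at hb
    · intro h
      exact absurd (hK _ (tsub_le_self)) h
  · intro a _ ha
    simp only [Multiset.mem_toFinset, Multiset.mem_powerset] at ha
    apply Finset.sum_eq_zero
    intro b _
    rw [if_neg]
    rintro rfl
    exact ha (Multiset.le_add_right a b)

lemma zPart_eq (μ : Multiset ℕ) : zPart μ = (μ.map (fun d : ℕ => (d : ℚ))).prod * facProd μ := by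
  unfold zPart facProd
  rw [Finset.prod_mul_distrib, Finset.prod_multiset_map_count]

lemma prod_inv (μ : Multiset ℕ) (f : ℕ → ℚ) :
    (μ.map (fun d => (f d)⁻¹)).prod = ((μ.map f).prod)⁻¹ := by
  induction μ using Multiset.induction_on with
  | empty => simp
  | cons a s ih => simp [ih, mul_comm]

lemma E_scale (c : ℕ → ℚ) (μ : Multiset ℕ) :
    (μ.map c).prod / zPart μ = E (fun d => c d * (d : ℚ)⁻¹) μ := by
  rw [zPart_eq, E, Multiset.prod_map_mul, prod_inv]
  rw [div_mul_eq_div_div]; rfl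

lemma pow_sum (ε : ℚ) (μ : Multiset ℕ) : (μ.map (fun d => ε ^ d)).prod = ε ^ μ.sum := by
  induction μ using Multiset.induction_on with
  | empty => simp
  | cons a s ih => simp [ih, pow_add]

/-- weight of the doubled parts -/
def wt (d : ℕ) : ℚ := if Even d then -(d : ℚ)⁻¹ else 0

lemma two_inj : Function.Injective (fun x : ℕ => 2 * x) := by
  intro a b h; simpa using h

lemma facProd_double (τ : Multiset ℕ) : facProd (τ.map (2 * ·)) = facProd τ := by
  induction τ using Multiset.induction_on with
  | empty => simp
  | cons a s ih =>
    rw [Multiset.map_cons, facProd_cons, facProd_cons, ih]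
    have := Multiset.count_map_eq_count' (fun x : ℕ => 2 * x) s two_inj a
    rw [this]

lemma E_double (τ : Multiset ℕ) :
    (-1 : ℚ) ^ (Multiset.card τ) / (2 ^ (Multiset.card τ) * zPart τ) = E wt (τ.map (2 * ·)) := by
  rw [E, facProd_double, zPart_eq, ← mul_assoc, div_mul_eq_div_div]
  congr 1
  induction τ using Multiset.induction_on with
  | empty => simp
  | cons a s ih =>
    simp only [Multiset.map_cons, Multiset.prod_cons, Multiset.card_cons]
    rw [← ih]
    simp only [wt, even_two_mul, if_true]
    push_cast
    simp only [div_eq_mul_inv, mul_inv, pow_succ]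
    ring

lemma sum_double (σ : Multiset ℕ) (K : Finset (Multiset ℕ)) (h : σ.map (· / 2) ∈ K) :
    ∑ τ ∈ K, (if τ.map (2 * ·) = σ then E wt σ else 0) = E wt σ := by
  by_cases he : ∀ x ∈ σ, Even x
  · have h2 : (σ.map (· / 2)).map (2 * ·) = σ := by
      rw [Multiset.map_map]
      conv_rhs => rw [← Multiset.map_id σ]
      apply Multiset.map_congr rfl
      intro x hx
      have := Nat.two_mul_div_two_of_even (he x hx)
      simpa using this
    rw [Finset.sum_eq_single (σ.map (· / 2))]
    · rw [if_pos h2]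
    · intro b _ hb
      rw [if_neg]
      intro hbs
      apply hb
      apply Multiset.map_injective two_inj
      exact hbs.trans h2.symm
    · intro hn; exact absurd h hn
  · push Not at he
    obtain ⟨x, hx, hxe⟩ := he
    have : E wt σ = 0 := by
      rw [E, Multiset.prod_eq_zero, zero_div]
      exact Multiset.mem_map.2 ⟨x, hx, by rw [wt, if_neg hxe]⟩
    simp [this]

lemma triple (u v : ℕ → ℚ) (s : Multiset ℕ) (K : Finset (Multiset ℕ))
    (hK : ∀ t ≤ s, t ∈ K) (hK2 : ∀ t ≤ s, t.map (· / 2) ∈ K) :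
    ∑ a ∈ K, ∑ b ∈ K, ∑ τ ∈ K,
      (if a + b + τ.map (2 * ·) = s then E u a * E v b * E wt (τ.map (2 * ·)) else 0) =
      E (fun d => u d + (v d + wt d)) s := by
  rw [← conv2 u (fun d => v d + wt d) s K hK]
  apply Finset.sum_congr rfl
  intro a _
  by_cases ha : a ≤ s
  · obtain ⟨r, rfl⟩ := Multiset.le_iff_exists_add.1 ha
    have hr : r ≤ a + r := Multiset.le_add_left r a
    conv_rhs => rw [Finset.sum_eq_single r (fun b _ hb => if_neg (by simpa using hb))
      (fun hn => absurd (hK r hr) hn), if_pos rfl]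
    rw [← conv2 v wt r K (fun t ht => hK t (ht.trans hr)), Finset.mul_sum]
    apply Finset.sum_congr rfl
    intro b _
    by_cases hb : b ≤ r
    · obtain ⟨q, rfl⟩ := Multiset.le_iff_exists_add.1 hb
      have hq : q ≤ b + q := Multiset.le_add_left q b
      conv_rhs => rw [Finset.sum_eq_single q (fun c _ hc => if_neg (by simpa using hc))
        (fun hn => absurd (hK q (hq.trans hr)) hn), if_pos rfl]
      rw [← sum_double q K (hK2 q (hq.trans hr)), Finset.mul_sum, Finset.mul_sum]
      apply Finset.sum_congr rfl
      intro τ _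
      by_cases h : τ.map (2 * ·) = q
      · rw [if_pos (by rw [h, add_assoc]), if_pos h, h]; ring
      · rw [if_neg, if_neg h]
        · simp
        · rw [add_assoc]; simpa using h
    · have h0 : ∑ c ∈ K, (if b + c = r then E v b * E wt c else 0) = 0 :=
        Finset.sum_eq_zero fun c _ =>
          if_neg (fun h : b + c = r => hb (h ▸ Multiset.le_add_right b c))
      rw [h0, mul_zero]
      apply Finset.sum_eq_zero
      · intro c _
        refine if_neg (fun h => hb ?_)
        rw [add_assoc, add_right_inj] at h
        exact h ▸ Multiset.le_add_right b _
  · have h0 : ∑ c ∈ K, (if a + c = s then E u a * E (fun d => v d + wt d) c else 0) = 0 :=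
      Finset.sum_eq_zero fun c _ =>
        if_neg (fun h : a + c = s => ha (h ▸ Multiset.le_add_right a c))
    rw [h0]
    apply Finset.sum_eq_zero
    · intro c _
      apply Finset.sum_eq_zero
      intro τ _
      refine if_neg (fun h => ha ?_)
      rw [add_assoc] at h
      exact h ▸ Multiset.le_add_right a _

/-- The signed sum. -/
def S (ε : ℚ) (π : Multiset ℕ) : ℚ :=
  ∑ ρp ∈ decompCarrier π, ∑ ρm ∈ decompCarrier π,
    ∑ τs ∈ decompCarrier π, ∑ τp ∈ decompCarrier π,
      if ρp + ρm + Multiset.map (2 * ·) τs + (τp + τp) = π then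
        ε ^ ρm.sum * ((-1 : ℚ) ^ (Multiset.card τs) /
          (zPart ρp * zPart ρm * 2 ^ (Multiset.card τs) * zPart τs *
            2 ^ (Multiset.card τp) * zPart τp))
      else 0

lemma C_eq (π : Multiset ℕ) : Cfun π = S 1 π := by
  unfold Cfun Cplus Cminus S
  simp only [← Finset.sum_add_distrib]
  refine Finset.sum_congr rfl fun a _ => Finset.sum_congr rfl fun b _ =>
    Finset.sum_congr rfl fun c _ => Finset.sum_congr rfl fun d _ => ?_
  rcases Nat.even_or_odd b.sum with h | h
  · have h' := Nat.not_odd_iff_even.2 h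
    simp [h, h']
  · have h' := Nat.not_even_iff_odd.2 h
    simp [h, h']

lemma D_eq (π : Multiset ℕ) : Dfun π = S (-1) π := by
  unfold Dfun Cplus Cminus S
  simp only [← Finset.sum_sub_distrib]
  refine Finset.sum_congr rfl fun a _ => Finset.sum_congr rfl fun b _ =>
    Finset.sum_congr rfl fun c _ => Finset.sum_congr rfl fun d _ => ?_
  rcases Nat.even_or_odd b.sum with h | h
  · have h' := Nat.not_odd_iff_even.2 h
    simp only [h, h', and_true, and_false, if_false, sub_zero, h.neg_one_pow, one_mul]
  · have h' := Nat.not_even_iff_odd.2 h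
    simp only [h, h', and_true, and_false, if_false, zero_sub, h.neg_one_pow, neg_mul, one_mul]
    split_ifs <;> simp

lemma zPart_nonneg (μ : Multiset ℕ) : 0 ≤ zPart μ := by
  unfold zPart
  exact Finset.prod_nonneg fun i _ => by positivity

lemma S_nonneg (ε : ℚ) (hε : ε = 1 ∨ ε = -1) (π : Multiset ℕ) : 0 ≤ S ε π := by
  have hS : S ε π = ∑ τp ∈ decompCarrier π, ∑ ρp ∈ decompCarrier π, ∑ ρm ∈ decompCarrier π,
      ∑ τs ∈ decompCarrier π,
      if ρp + ρm + Multiset.map (2 * ·) τs + (τp + τp) = π then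
        ε ^ ρm.sum * ((-1 : ℚ) ^ (Multiset.card τs) /
          (zPart ρp * zPart ρm * 2 ^ (Multiset.card τs) * zPart τs *
            2 ^ (Multiset.card τp) * zPart τp))
      else 0 := by
    unfold S
    rw [Finset.sum_comm' (s' := fun _ => decompCarrier π) (t' := decompCarrier π) (by simp)]
    rw [Finset.sum_comm]
    conv_rhs => rw [Finset.sum_comm]
    refine Finset.sum_congr rfl fun a _ => ?_
    conv_rhs => rw [Finset.sum_comm]
    refine Finset.sum_congr rfl fun b _ => ?_
    conv_rhs => rw [Finset.sum_comm]
  rw [hS]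
  apply Finset.sum_nonneg
  intro τp _
  by_cases hle : τp + τp ≤ π
  · obtain ⟨s, hs⟩ := Multiset.le_iff_exists_add.1 hle
    have hsπ : s ≤ π := hs ▸ Multiset.le_add_left s _
    have key := triple (fun d => 1 * (d : ℚ)⁻¹) (fun d => ε ^ d * (d : ℚ)⁻¹) s (decompCarrier π)
      (by
        intro t ht
        simp only [decompCarrier, Finset.mem_union, Multiset.mem_toFinset, Multiset.mem_powerset]
        exact Or.inl (ht.trans hsπ))
      (by
        intro t ht
        simp only [decompCarrier, Finset.mem_union, Finset.mem_image, Multiset.mem_toFinset,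
          Multiset.mem_powerset]
        exact Or.inr ⟨t, ht.trans hsπ, rfl⟩)
    have hpos : 0 ≤ E (fun d => 1 * (d : ℚ)⁻¹ + (ε ^ d * (d : ℚ)⁻¹ + wt d)) s := by
      apply E_nonneg
      intro d
      have hd : (0 : ℚ) ≤ (d : ℚ)⁻¹ := by positivity
      unfold wt
      rcases Nat.even_or_odd d with h | h
      · have h1 : ε ^ d = 1 := by rcases hε with rfl | rfl <;> simp [h]
        rw [if_pos h, h1]; linarith
      · rw [if_neg (Nat.not_even_iff_odd.2 h)]
        rcases hε with rfl | rfl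
        · rw [one_pow]; linarith
        · rw [h.neg_one_pow]; linarith
    rw [← key] at hpos
    have hc : 0 ≤ (2 ^ (Multiset.card τp) * zPart τp)⁻¹ :=
      inv_nonneg.2 (mul_nonneg (by positivity) (zPart_nonneg _))
    refine (mul_nonneg hc hpos).trans_eq ?_
    simp only [Finset.mul_sum]
    refine Finset.sum_congr rfl fun a _ => Finset.sum_congr rfl fun b _ =>
      Finset.sum_congr rfl fun c _ => ?_
    have hiff : a + b + Multiset.map (2 * ·) c + (τp + τp) = π ↔
        a + b + Multiset.map (2 * ·) c = s := by
      rw [hs, add_comm (τp + τp) s, add_left_inj]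
    simp only [hiff]
    split_ifs
    · rw [← E_double, ← E_scale (fun _ => 1), ← E_scale (fun d => ε ^ d), pow_sum]
      simp only [div_eq_mul_inv, mul_inv, Multiset.map_const', Multiset.prod_replicate, one_pow]
      ring
    · simp
  · apply le_of_eq
    symm
    refine Finset.sum_eq_zero fun a _ => Finset.sum_eq_zero fun b _ =>
      Finset.sum_eq_zero fun c _ => if_neg fun h => hle ?_
    exact h ▸ Multiset.le_add_left _ _

end Stmt12Aux

/-- The rational numbers `C_π` and `D_π` are non-negative for every partition `π`. -/
theorem stmt12 (π : Multiset ℕ) (hπ : ∀ x ∈ π, 0 < x) :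
    0 ≤ Cfun π ∧ 0 ≤ Dfun π := by
  rw [Stmt12Aux.C_eq, Stmt12Aux.D_eq]
  exact ⟨Stmt12Aux.S_nonneg 1 (Or.inl rfl) π, Stmt12Aux.S_nonneg (-1) (Or.inr rfl) π⟩
end

section
/- For every n ≥ 0, ∑_{λ ⊢ n} ∏_{d} (m_d(λ) + 1) = ∑_{j=0}^{n} p(j)·p(n−j), where the sum on the left is over all partitions λ of n, the product is over the distinct parts d of λ, and m_d(λ) is the multiplicity of d in λ. -/
/-- `∑_{λ ⊢ n} ∏_d (m_d(λ) + 1) = ∑_{j=0}^{n} p(j)·p(n-j)`. -/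
theorem stmt14 (n : ℕ) :
    ∑ P : Nat.Partition n, ∏ d ∈ P.parts.toFinset, (P.parts.count d + 1) =
      ∑ j ∈ Finset.range (n + 1),
        Fintype.card (Nat.Partition j) * Fintype.card (Nat.Partition (n - j)) := by
  have h1 : ∀ P : Nat.Partition n, ∏ d ∈ P.parts.toFinset, (P.parts.count d + 1) =
      (Finset.Iic P.parts).card := fun P => (Multiset.card_Iic _).symm
  have h2 : ∀ j, Fintype.card (Nat.Partition j) * Fintype.card (Nat.Partition (n - j)) =
      (Finset.univ : Finset (Nat.Partition j × Nat.Partition (n - j))).card := by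
    intro j
    rw [Finset.card_univ, Fintype.card_prod]
  simp_rw [h1, h2]
  rw [← Finset.card_sigma, ← Finset.card_sigma]
  symm
  refine Finset.card_bij (fun x hx => ⟨⟨x.2.1.parts + x.2.2.parts, ?_, ?_⟩, x.2.1.parts⟩) ?_ ?_ ?_
  · intro i hi
    rcases Multiset.mem_add.1 hi with h | h
    · exact x.2.1.parts_pos h
    · exact x.2.2.parts_pos h
  · have := (Finset.mem_sigma.1 hx).1
    rw [Finset.mem_range] at this
    rw [Multiset.sum_add, x.2.1.parts_sum, x.2.2.parts_sum]
    omega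
  · intro x hx
    simp
  · rintro ⟨j, A, B⟩ hx ⟨k, C, D⟩ hy h
    simp only [Sigma.mk.injEq, Nat.Partition.mk.injEq, heq_eq_eq] at h
    obtain ⟨h, h'⟩ := h
    have hjk : j = k := by rw [← A.parts_sum, ← C.parts_sum, h']
    subst hjk
    rw [h'] at h
    have hA : A = C := Nat.Partition.ext h'
    have hB : B = D := Nat.Partition.ext (add_left_cancel h)
    rw [hA, hB]
  · rintro ⟨P, s⟩ hx
    have hs : s ≤ P.parts := by simpa using hx
    obtain ⟨t, ht⟩ := Multiset.le_iff_exists_add.1 hs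
    have hsum : s.sum + t.sum = n := by rw [← Multiset.sum_add, ← ht, P.parts_sum]
    refine ⟨⟨s.sum, ⟨s, fun hi => P.parts_pos (ht ▸ Multiset.mem_add.2 (Or.inl hi)), rfl⟩,
      ⟨t, fun hi => P.parts_pos (ht ▸ Multiset.mem_add.2 (Or.inr hi)), by omega⟩⟩, ?_, ?_⟩
    · simp only [Finset.mem_sigma, Finset.mem_range, Finset.mem_univ, and_true]
      omega
    · simp only [Sigma.mk.injEq, heq_eq_eq, and_true]
      exact Nat.Partition.ext ht.symm
end

section
/- For every n ≥ 0, ∑_{λ ⊢ n} ∏_{d} (m_d(λ) + 1)² equals the number of quadruples (μ₁, μ₂, μ₃, δ) where μ₁, μ₂, μ₃ are partitions, δ is a partition into distinct parts, and |μ₁| + |μ₂| + |μ₃| + |δ| = n. Here the sum is over all partitions λ of n, the product is over the distinct parts d of λ, and m_d(λ) is the multiplicity of d in λ. -/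
/-- The possible local multiplicities at one part of total multiplicity `m`. -/
def quadA (m : ℕ) : Finset (ℕ × ℕ × ℕ × ℕ) :=
  (Finset.range 2 ×ˢ Finset.range (m + 1) ×ˢ Finset.range (m + 1) ×ˢ Finset.range (m + 1)).filter
    (fun q => q.2.2.2 + q.2.2.1 + q.2.1 + q.1 = m)

lemma mem_quadA (m : ℕ) (q : ℕ × ℕ × ℕ × ℕ) :
    q ∈ quadA m ↔ q.1 ≤ 1 ∧ q.2.2.2 + q.2.2.1 + q.2.1 + q.1 = m := by
  simp only [quadA, Finset.mem_filter, Finset.mem_product, Finset.mem_range]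
  omega

lemma sum_aux1 (m s : ℕ) :
    ∑ a ∈ Finset.range (m + 1), (if a + s = m then 1 else 0) = if s ≤ m then 1 else 0 := by
  split_ifs with h
  · rw [Finset.sum_eq_single (m - s)]
    · rw [if_pos (by omega)]
    · intro b _ hb
      rw [if_neg (by omega)]
    · intro hb
      simp only [Finset.mem_range] at hb
      omega
  · apply Finset.sum_eq_zero
    intro a _
    rw [if_neg (by omega)]

lemma sum_aux2 (m s : ℕ) :
    ∑ b ∈ Finset.range (m + 1), (if b + s ≤ m then 1 else 0) = m + 1 - s := by
  rw [← Finset.card_filter]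
  have : (Finset.range (m + 1)).filter (fun b => b + s ≤ m) = Finset.range (m + 1 - s) := by
    ext b
    simp only [Finset.mem_filter, Finset.mem_range]
    omega
  rw [this, Finset.card_range]

lemma sum_aux3 (m : ℕ) :
    ∑ c ∈ Finset.range (m + 1), (m + 1 - c) + ∑ c ∈ Finset.range (m + 1), (m + 1 - (c + 1))
      = (m + 1) ^ 2 := by
  rw [← Finset.sum_range_reflect, ← Finset.sum_add_distrib,
    Finset.sum_congr rfl (g := fun _ => m + 1)]
  · simp [sq]
  · intro c hc
    simp only [Finset.mem_range] at hc
    omega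

lemma card_quadA (m : ℕ) : (quadA m).card = (m + 1) ^ 2 := by
  rw [quadA, Finset.card_filter, Finset.sum_product]
  simp only [Finset.sum_product, add_assoc, sum_aux1, sum_aux2]
  rw [Finset.sum_range_succ, Finset.sum_range_one]
  simpa using sum_aux3 m

/-- Multiset with prescribed multiplicities. -/
def mkMul (s : Finset ℕ) (g : ∀ d ∈ s, ℕ) : Multiset ℕ :=
  ∑ d ∈ s.attach, Multiset.replicate (g d.1 d.2) d.1

lemma count_mkMul_mem (s : Finset ℕ) (g : ∀ d ∈ s, ℕ) (d : ℕ) (h : d ∈ s) :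
    (mkMul s g).count d = g d h := by
  rw [mkMul, Multiset.count_sum', Finset.sum_eq_single ⟨d, h⟩]
  · simp
  · intro b _ hb
    rw [Multiset.count_replicate, if_neg]
    intro h'
    exact hb (Subtype.ext h')
  · intro h'
    exact absurd (Finset.mem_attach _ _) h'

lemma count_mkMul_notMem (s : Finset ℕ) (g : ∀ d ∈ s, ℕ) (d : ℕ) (h : d ∉ s) :
    (mkMul s g).count d = 0 := by
  rw [mkMul, Multiset.count_sum']
  apply Finset.sum_eq_zero
  intro b _
  rw [Multiset.count_replicate, if_neg]
  rintro rfl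
  exact h b.2

lemma mem_of_mem_mkMul (s : Finset ℕ) (g : ∀ d ∈ s, ℕ) (d : ℕ) (h : d ∈ mkMul s g) : d ∈ s := by
  by_contra h'
  have := count_mkMul_notMem s g d h'
  rw [Multiset.count_eq_zero] at this
  exact this h

/-- The quadruples of the statement. -/
abbrev Quad (n : ℕ) := {t : Multiset ℕ × Multiset ℕ × Multiset ℕ × Multiset ℕ //
        (∀ x ∈ t.1, 0 < x) ∧ (∀ x ∈ t.2.1, 0 < x) ∧ (∀ x ∈ t.2.2.1, 0 < x) ∧
        (∀ x ∈ t.2.2.2, 0 < x) ∧ t.2.2.2.Nodup ∧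
        t.1.sum + t.2.1.sum + t.2.2.1.sum + t.2.2.2.sum = n}

/-- Union of the four partitions. -/
def quadUnion (n : ℕ) (t : Quad n) : Nat.Partition n where
  parts := t.1.1 + t.1.2.1 + t.1.2.2.1 + t.1.2.2.2
  parts_pos := by
    obtain ⟨t, h1, h2, h3, h4, h5, h6⟩ := t
    intro i hi
    simp only [Multiset.mem_add] at hi
    rcases hi with ((hi | hi) | hi) | hi
    exacts [h1 i hi, h2 i hi, h3 i hi, h4 i hi]
  parts_sum := by
    obtain ⟨t, h1, h2, h3, h4, h5, h6⟩ := t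
    simpa using h6

/-- Local multiplicities of a quadruple in the fibre. -/
def fibMap (n : ℕ) (P : Nat.Partition n) (t : {t : Quad n // quadUnion n t = P}) :
    {g // g ∈ P.parts.toFinset.pi (fun d => quadA (P.parts.count d))} :=
  ⟨fun d _ => (t.1.1.2.2.2.count d, t.1.1.2.2.1.count d, t.1.1.2.1.count d, t.1.1.1.count d), by
    obtain ⟨⟨t, h1, h2, h3, h4, h5, h6⟩, rfl⟩ := t
    rw [Finset.mem_pi]
    intro d _
    rw [mem_quadA]
    refine ⟨Multiset.nodup_iff_count_le_one.1 h5 d, ?_⟩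
    simp [quadUnion]⟩

lemma fib_count {n : ℕ} {P : Nat.Partition n} (t : {t : Quad n // quadUnion n t = P}) (d : ℕ) :
    t.1.1.1.count d + t.1.1.2.1.count d + t.1.1.2.2.1.count d + t.1.1.2.2.2.count d
      = P.parts.count d := by
  obtain ⟨t, rfl⟩ := t
  simp [quadUnion]

lemma fibMap_inj (n : ℕ) (P : Nat.Partition n) : Function.Injective (fibMap n P) := by
  intro t u h
  have key : ∀ d, t.1.1.2.2.2.count d = u.1.1.2.2.2.count d ∧
      t.1.1.2.2.1.count d = u.1.1.2.2.1.count d ∧ t.1.1.2.1.count d = u.1.1.2.1.count d ∧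
      t.1.1.1.count d = u.1.1.1.count d := by
    intro d
    by_cases hd : d ∈ P.parts.toFinset
    · have := congrFun (congrFun (congrArg Subtype.val h) d) hd
      simpa [fibMap] using this
    · have h0 : P.parts.count d = 0 := by
        rw [Multiset.count_eq_zero]
        simpa using hd
      have h1 := fib_count t d
      have h2 := fib_count u d
      omega
  apply Subtype.ext
  apply Subtype.ext
  refine Prod.ext ?_ (Prod.ext ?_ (Prod.ext ?_ ?_))
  · exact Multiset.ext.2 fun d => (key d).2.2.2
  · exact Multiset.ext.2 fun d => (key d).2.2.1
  · exact Multiset.ext.2 fun d => (key d).2.1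
  · exact Multiset.ext.2 fun d => (key d).1

lemma fibMap_surj (n : ℕ) (P : Nat.Partition n) : Function.Surjective (fibMap n P) := by
  rintro ⟨g, hg⟩
  rw [Finset.mem_pi] at hg
  simp only [mem_quadA] at hg
  have hpos : ∀ (f : ∀ d ∈ P.parts.toFinset, ℕ), ∀ x ∈ mkMul P.parts.toFinset f, 0 < x := by
    intro f x hx
    have := mem_of_mem_mkMul P.parts.toFinset f x hx
    rw [Multiset.mem_toFinset] at this
    exact P.parts_pos this
  have hsum : mkMul P.parts.toFinset (fun d h => (g d h).2.2.2) + mkMul P.parts.toFinset (fun d h => (g d h).2.2.1)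
      + mkMul P.parts.toFinset (fun d h => (g d h).2.1) + mkMul P.parts.toFinset (fun d h => (g d h).1) = P.parts := by
    ext d
    simp only [Multiset.count_add]
    by_cases hd : d ∈ P.parts.toFinset
    · simp only [count_mkMul_mem P.parts.toFinset _ d hd]
      exact (hg d hd).2
    · simp only [count_mkMul_notMem P.parts.toFinset _ d hd]
      symm
      simp only [add_zero]
      rw [Multiset.count_eq_zero]
      simpa using hd
  refine ⟨⟨⟨(mkMul P.parts.toFinset (fun d h => (g d h).2.2.2), mkMul P.parts.toFinset (fun d h => (g d h).2.2.1),
      mkMul P.parts.toFinset (fun d h => (g d h).2.1), mkMul P.parts.toFinset (fun d h => (g d h).1)),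
      hpos (fun d h => (g d h).2.2.2), hpos (fun d h => (g d h).2.2.1),
      hpos (fun d h => (g d h).2.1), hpos (fun d h => (g d h).1), ?_, ?_⟩, ?_⟩, ?_⟩
  · rw [Multiset.nodup_iff_count_le_one]
    intro d
    by_cases hd : d ∈ P.parts.toFinset
    · simp only [count_mkMul_mem P.parts.toFinset _ d hd]
      exact (hg d hd).1
    · simp only [count_mkMul_notMem P.parts.toFinset _ d hd]
      omega
  · simp only [← Multiset.sum_add]
    rw [hsum, P.parts_sum]
  · exact Nat.Partition.ext hsum
  · apply Subtype.ext
    funext d hd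
    simp only [fibMap, count_mkMul_mem P.parts.toFinset _ d hd]

/-- `∑_{λ ⊢ n} ∏_d (m_d(λ) + 1)²` equals the number of quadruples `(μ₁, μ₂, μ₃, δ)` of
partitions with `δ` having distinct parts and total weight `n`. -/
theorem stmt15 (n : ℕ) :
    ∑ P : Nat.Partition n, ∏ d ∈ P.parts.toFinset, (P.parts.count d + 1) ^ 2 =
      Nat.card {t : Multiset ℕ × Multiset ℕ × Multiset ℕ × Multiset ℕ //
        (∀ x ∈ t.1, 0 < x) ∧ (∀ x ∈ t.2.1, 0 < x) ∧ (∀ x ∈ t.2.2.1, 0 < x) ∧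
        (∀ x ∈ t.2.2.2, 0 < x) ∧ t.2.2.2.Nodup ∧
        t.1.sum + t.2.1.sum + t.2.2.1.sum + t.2.2.2.sum = n} := by
  have hfin : ∀ P : Nat.Partition n, Finite {t : Quad n // quadUnion n t = P} :=
    fun P => Finite.of_injective _ (fibMap_inj n P)
  change _ = Nat.card (Quad n)
  rw [← Nat.card_congr (Equiv.sigmaFiberEquiv (quadUnion n)), Nat.card_sigma]
  refine Finset.sum_congr rfl fun P _ => ?_
  rw [Nat.card_eq_of_bijective _ ⟨fibMap_inj n P, fibMap_surj n P⟩, Nat.card_eq_fintype_card,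
    Fintype.card_coe, Finset.card_pi]
  simp only [card_quadA]
end
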